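/- arXiv:1502.07618 — 3 statements merged into one kernel-verified Lean document; each statement's English description precedes it below -/
import Mathlib

section
/- Suppose the invertible RDS φ on 𝕊¹ is contractible and admits a reverse-stationary probability measure ρ that is atomless and has full support. Then φ is stably synchronising. -/
open MeasureTheory Filter Topology Set ENNReal

noncomputable section

/-- The natural projection `π : ℝ → 𝕊¹ = ℝ/ℤ`. -/
def circleProj (x : ℝ) : UnitAddCircle := (x : UnitAddCircle)

/-- `f` is an orientation-preserving homeomorphism of the circle: it admits a strictly
monotone degree-one lift. -/
def OrientPreserving (f : UnitAddCircle ≃ₜ UnitAddCircle) : Prop :=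
  ∃ F : ℝ → ℝ, StrictMono F ∧ (∀ x : ℝ, F (x + 1) = F x + 1) ∧
    ∀ x : ℝ, f (circleProj x) = circleProj (F x)

/-- The anticlockwise distance `d₊(x,y) = min {r ≥ 0 : π(x' + r) = y}` (`x'` any lift of `x`). -/
def dPlus (x y : UnitAddCircle) : ℝ :=
  sInf {r : ℝ | 0 ≤ r ∧ ∃ x' : ℝ, circleProj x' = x ∧ circleProj (x' + r) = y}

/-- An invertible random dynamical system on the circle, in discrete or continuous time,
driven by a stationary memoryless noise process. -/
structure RDS (Ω : Type) [m : MeasurableSpace Ω] where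
  /-- the time set `𝕋⁺`: either `ℕ ∪ {0}` or `[0,∞)`, viewed inside `ℝ` -/
  T : Set ℝ
  T_cases : T = Set.range (fun n : ℕ => (n : ℝ)) ∨ T = Set.Ici (0 : ℝ)
  /-- the filtration -/
  F : ℝ → MeasurableSpace Ω
  F_le : ∀ t ∈ T, F t ≤ m
  F_mono : ∀ s ∈ T, ∀ t ∈ T, s ≤ t → F s ≤ F t
  /-- the probability measure -/
  P : Measure Ω
  P_prob : IsProbabilityMeasure P
  /-- the time-shift maps on the noise space -/
  θ : ℝ → Ω → Ω
  θ_zero : θ 0 = id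
  θ_add : ∀ s ∈ T, ∀ t ∈ T, θ (s + t) = θ t ∘ θ s
  θ_preserving : ∀ t ∈ T, MeasurePreserving (θ t) P P
  θ_adapted : ∀ s ∈ T, ∀ t ∈ T, @Measurable Ω Ω (F (s + t)) (F s) (θ t)
  θ_indep : ∀ t ∈ T, ∀ E A : Set Ω, MeasurableSet[F t] E →
    MeasurableSet[⨆ s ∈ T, F s] A → P (E ∩ θ t ⁻¹' A) = P E * P A
  /-- the random homeomorphisms -/
  φ : ℝ → Ω → UnitAddCircle ≃ₜ UnitAddCircle
  φ_orient : ∀ t ∈ T, ∀ ω, OrientPreserving (φ t ω)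
  φ_meas : ∀ t ∈ T, @Measurable (Ω × UnitAddCircle) UnitAddCircle
    ((F t).prod inferInstance) inferInstance (fun p => φ t p.1 p.2)
  φ_zero : ∀ ω, φ 0 ω = Homeomorph.refl UnitAddCircle
  φ_cocycle : ∀ s ∈ T, ∀ t ∈ T, ∀ ω x, φ (s + t) ω x = φ t (θ s ω) (φ s ω x)
  φ_cadlag_right : ∀ ω, ∀ t ∈ T, ∀ tn : ℕ → ℝ, (∀ n, tn n ∈ T) → Antitone tn →
    Tendsto tn atTop (𝓝 t) → ∀ (xn : ℕ → UnitAddCircle) (x : UnitAddCircle),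
      Tendsto xn atTop (𝓝 x) →
      Tendsto (fun n => φ (tn n) ω (xn n)) atTop (𝓝 (φ t ω x))
  /-- the left-limit maps -/
  φ_left_lim : ℝ → Ω → UnitAddCircle → UnitAddCircle
  φ_cadlag_left : ∀ ω, ∀ t ∈ T, ∀ tn : ℕ → ℝ, (∀ n, tn n ∈ T) → StrictMono tn →
    Tendsto tn atTop (𝓝 t) → ∀ (xn : ℕ → UnitAddCircle) (x : UnitAddCircle),
      Tendsto xn atTop (𝓝 x) →
      Tendsto (fun n => φ (tn n) ω (xn n)) atTop (𝓝 (φ_left_lim t ω x))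

/-- A probability measure on the circle is atomless if every singleton is null. -/
def Atomless (ρ : Measure UnitAddCircle) : Prop := ∀ x, ρ {x} = 0

/-- A measure on the circle has full support. -/
def FullSupport (ρ : Measure UnitAddCircle) : Prop :=
  ∀ U : Set UnitAddCircle, IsOpen U → U.Nonempty → 0 < ρ U

/-- The (topological) support of a measure on the circle. -/
def msupport (ρ : Measure UnitAddCircle) : Set UnitAddCircle :=
  {x | ∀ U : Set UnitAddCircle, IsOpen U → x ∈ U → 0 < ρ U}

namespace RDS

variable {Ω : Type} [m : MeasurableSpace Ω] (S : RDS Ω)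

/-- the future σ-algebra `𝓕₊ = σ(𝓕_t : t ∈ 𝕋⁺)`. -/
def Fplus : MeasurableSpace Ω := ⨆ t ∈ S.T, S.F t

/-- The filter "t → ∞ along the time set 𝕋⁺". -/
def tFilter : Filter ℝ := atTop ⊓ 𝓟 S.T

/-- two-point contractibility. -/
def Contractible : Prop := ∀ x y : UnitAddCircle, x ≠ y →
  0 < S.P {ω | ∃ t ∈ S.T, dist (S.φ t ω x) (S.φ t ω y) < dist x y}

/-- compressibility. -/
def Compressible : Prop := ∀ x y : UnitAddCircle, x ≠ y →
  0 < S.P {ω | ∃ t ∈ S.T, dPlus (S.φ t ω x) (S.φ t ω y) < dPlus x y}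

/-- `p` is a deterministic fixed point. -/
def DetFixedPoint (p : UnitAddCircle) : Prop :=
  ∀ᵐ ω ∂S.P, ∀ t ∈ S.T, S.φ t ω p = p

/-- `A` is forward-invariant. -/
def ForwardInvariant (A : Set UnitAddCircle) : Prop :=
  ∀ᵐ ω ∂S.P, ∀ t ∈ S.T, ⇑(S.φ t ω) '' A ⊆ A

/-- reverse-minimal dynamics: the only open forward-invariant sets are `∅` and `𝕊¹`. -/
def ReverseMinimal : Prop :=
  ∀ A : Set UnitAddCircle, IsOpen A → S.ForwardInvariant A → A = ∅ ∨ A = Set.univ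

/-- synchronisation. -/
def Synchronising : Prop := ∀ x y : UnitAddCircle,
  S.P {ω | Tendsto (fun t => dist (S.φ t ω x) (S.φ t ω y)) S.tFilter (𝓝 0)} = 1

/-- everywhere local stability. -/
def EverywhereLocallyStable : Prop := ∀ x : UnitAddCircle,
  S.P {ω | ∃ U : Set UnitAddCircle, IsOpen U ∧ x ∈ U ∧
    Tendsto (fun t => volume (⇑(S.φ t ω) '' U)) S.tFilter (𝓝 0)} = 1

/-- stable synchronisation. -/
def StablySynchronising : Prop := S.Synchronising ∧ S.EverywhereLocallyStable

/-- `ρ` is reverse-stationary: `ρ(A) = ∫ ρ(φ(t,ω)A) ℙ(dω)` for all `t ∈ 𝕋⁺`, Borel `A`. -/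
def ReverseStationary (ρ : Measure UnitAddCircle) : Prop :=
  ∀ t ∈ S.T, ∀ A : Set UnitAddCircle, MeasurableSet A →
    ρ A = ∫⁻ ω, ρ (⇑(S.φ t ω) '' A) ∂S.P

/-- `r` is a crack point of `ω`. -/
def CrackPoint (ω : Ω) (r : UnitAddCircle) : Prop :=
  ∀ G : Set UnitAddCircle, IsClosed G → r ∉ G →
    Tendsto (fun t => volume (⇑(S.φ t ω) '' G)) S.tFilter (𝓝 0)

/-- the set of contractive sample points. -/
def Ωc : Set Ω := {ω | ∃ r, S.CrackPoint ω r}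

/-- the reverse transition probabilities `φ̄ₓᵗ(A) = ℙ(ω : φ(t,ω)⁻¹(x) ∈ A)`. -/
def revTrans (t : ℝ) (x : UnitAddCircle) (A : Set UnitAddCircle) : ℝ≥0∞ :=
  S.P {ω | (S.φ t ω).symm x ∈ A}

/-- the forward transition probabilities `φₓᵗ(A) = ℙ(ω : φ(t,ω)x ∈ A)`. -/
def fwdTrans (t : ℝ) (x : UnitAddCircle) (A : Set UnitAddCircle) : ℝ≥0∞ :=
  S.P {ω | S.φ t ω x ∈ A}

/-- `ρ` is stationary for a transition family `ν`. -/
def StationaryFor (ν : ℝ → UnitAddCircle → Set UnitAddCircle → ℝ≥0∞)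
    (ρ : Measure UnitAddCircle) : Prop :=
  ∀ t ∈ S.T, ∀ A : Set UnitAddCircle, MeasurableSet A → ρ A = ∫⁻ x, ν t x A ∂ρ

/-- `ρ` is ergodic for a transition family `ν`. -/
def ErgodicFor (ν : ℝ → UnitAddCircle → Set UnitAddCircle → ℝ≥0∞)
    (ρ : Measure UnitAddCircle) : Prop :=
  S.StationaryFor ν ρ ∧ ∀ A : Set UnitAddCircle, MeasurableSet A →
    (∀ t ∈ S.T, ∀ᵐ x ∂ρ, x ∈ A → ν t x A = 1) → ρ A = 0 ∨ ρ A = 1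

end RDS



namespace SyncAux

abbrev C := UnitAddCircle

theorem coe_eq {a b : ℝ} (h : (a : C) = (b : C)) : ∃ k : ℤ, b = a + k := by
  have h1 : ((b - a : ℝ) : C) = 0 := by
    rw [AddCircle.coe_sub, h, sub_self]
  obtain ⟨n, hn⟩ := (AddCircle.coe_eq_zero_iff (1 : ℝ)).1 h1
  refine ⟨n, ?_⟩
  simp at hn
  linarith

theorem coe_add_int (a : ℝ) (k : ℤ) : ((a + k : ℝ) : C) = (a : C) := by
  have : ((k : ℝ) : C) = 0 := (AddCircle.coe_eq_zero_iff (1 : ℝ)).2 ⟨k, by simp⟩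
  rw [AddCircle.coe_add, this, add_zero]

theorem exists_lift (x : C) (t : ℝ) : ∃ a ∈ Ico t (t + 1), (a : C) = x := by
  refine ⟨AddCircle.equivIco 1 t x, (AddCircle.equivIco 1 t x).2, ?_⟩
  exact AddCircle.coe_equivIco 

theorem dist_coe_le (a b : ℝ) : dist (a : C) (b : C) ≤ |a - b| := by
  rw [dist_eq_norm, ← AddCircle.coe_sub]
  rw [AddCircle.norm_eq]
  simpa using round_le (a - b) 0

theorem exists_lift_dist (x : C) (b : ℝ) : ∃ a : ℝ, (a : C) = x ∧ |a - b| = dist x (b : C) := by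
  obtain ⟨a0, -, rfl⟩ := exists_lift x 0
  refine ⟨a0 + ((- round (a0 - b) : ℤ) : ℝ), coe_add_int _ _, ?_⟩
  rw [dist_eq_norm, ← AddCircle.coe_sub, AddCircle.norm_eq]
  simp
  congr 1
  ring

/-- strict cyclic betweenness on the circle -/
def SB (x z y : C) : Prop :=
  ∃ a c b : ℝ, a < c ∧ c < b ∧ b < a + 1 ∧ (a : C) = x ∧ (c : C) = z ∧ (b : C) = y

def arc (x y : C) : Set C := {z | SB x z y}

theorem isOpen_SB : IsOpen {p : C × C × C | SB p.1 p.2.1 p.2.2} := by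
  have ho : IsOpenMap (fun a : ℝ => (a : C)) := QuotientAddGroup.isOpenMap_coe
  have h3 := (ho.prodMap (ho.prodMap ho))
  have hop : IsOpen {q : ℝ × ℝ × ℝ | q.1 < q.2.1 ∧ q.2.1 < q.2.2 ∧ q.2.2 < q.1 + 1} := by
    refine IsOpen.and (isOpen_lt (by fun_prop) (by fun_prop))
      (IsOpen.and (isOpen_lt (by fun_prop) (by fun_prop)) (isOpen_lt (by fun_prop) (by fun_prop)))
  convert h3 _ hop using 1
  ext ⟨x, z, y⟩
  constructor
  · rintro ⟨a, c, b, h1, h2, h3, h4, h5, h6⟩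
    exact ⟨(a, c, b), ⟨h1, h2, h3⟩, by simp at h4 h5 h6; simp [h4, h5, h6]⟩
  · rintro ⟨⟨a, c, b⟩, ⟨h1, h2, h3⟩, h⟩
    simp at h
    exact ⟨a, c, b, h1, h2, h3, h.1, h.2.1, h.2.2⟩

theorem isOpen_arc (x y : C) : IsOpen (arc x y) := by
  have : arc x y = (fun z => (x, z, y)) ⁻¹' {p : C × C × C | SB p.1 p.2.1 p.2.2} := rfl
  rw [this]
  exact isOpen_SB.preimage (by fun_prop)

theorem int_zero_of {k : ℤ} (h1 : (-1 : ℝ) < k) (h2 : (k : ℝ) < 1) : k = 0 := by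
  have h1' : (-1 : ℤ) < k := by exact_mod_cast h1
  have h2' : k < 1 := by exact_mod_cast h2
  omega

theorem SB_lift {a b : ℝ} (hab : a < b) (hb : b < a + 1) (z : C) :
    SB a z b ↔ ∃ c, a < c ∧ c < b ∧ (c : C) = z := by
  constructor
  · rintro ⟨a', c, b', h1, h2, h3, h4, h5, h6⟩
    obtain ⟨k, hk⟩ := coe_eq h4
    obtain ⟨l, hl⟩ := coe_eq h6
    have : l - k = 0 := by
      apply int_zero_of <;> push_cast <;> linarith
    have hlk : l = k := by omega
    subst hlk
    refine ⟨c + l, by linarith, by linarith, ?_⟩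
    rw [coe_add_int, h5]
  · rintro ⟨c, h1, h2, h3⟩
    exact ⟨a, c, b, h1, h2, hb, rfl, h3, rfl⟩

theorem lift_pair {x y : C} (h : x ≠ y) (t : ℝ) (ht : (t : C) = x) :
    ∃ b : ℝ, t < b ∧ b < t + 1 ∧ (b : C) = y := by
  obtain ⟨b, hb, rfl⟩ := exists_lift y t
  refine ⟨b, lt_of_le_of_ne hb.1 ?_, hb.2, rfl⟩
  rintro rfl
  exact h ht.symm

theorem coe_ne {a b : ℝ} (hab : a < b) (hb : b < a + 1) : (a : C) ≠ b := by
  intro h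
  obtain ⟨k, hk⟩ := coe_eq h
  have : k = 0 := by apply int_zero_of <;> linarith
  subst this
  simp at hk
  linarith

theorem SB_ne {x z y : C} (h : SB x z y) : x ≠ y ∧ x ≠ z ∧ z ≠ y := by
  obtain ⟨a, c, b, h1, h2, h3, rfl, rfl, rfl⟩ := h
  exact ⟨coe_ne (by linarith) h3, coe_ne h1 (by linarith), coe_ne h2 (by linarith)⟩

theorem SB_total {x z y : C} (h : x ≠ y) (h2 : x ≠ z) (h3 : z ≠ y) : SB x z y ∨ SB y z x := by
  obtain ⟨a, -, rfl⟩ := exists_lift x 0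
  obtain ⟨b, hb1, hb2, rfl⟩ := lift_pair h a rfl
  obtain ⟨c, hc1, hc2, rfl⟩ := lift_pair h2 a rfl
  rcases lt_trichotomy c b with hcb | hcb | hcb
  · exact Or.inl ⟨a, c, b, hc1, hcb, hb2, rfl, rfl, rfl⟩
  · exact absurd (by rw [hcb]) h3
  · refine Or.inr ⟨b, c, a + (1 : ℤ), hcb, by push_cast; linarith, by push_cast; linarith, rfl, rfl, ?_⟩
    rw [coe_add_int]

theorem SB_disj {x z y : C} (h : SB x z y) (h' : SB y z x) : False := by
  obtain ⟨a, c, b, h1, h2, h3, rfl, rfl, rfl⟩ := h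
  have e : ((a : ℝ) : C) = ((a + 1 : ℝ) : C) := by
    have := coe_add_int a 1
    push_cast at this
    exact this.symm
  rw [e, SB_lift h3 (by linarith)] at h'
  obtain ⟨c', h4, h5, h6⟩ := h'
  exact coe_ne (a := c) (b := c') (by linarith) (by linarith) h6.symm

theorem SB_map {f : C ≃ₜ C} (hf : OrientPreserving f) {x z y : C} (h : SB x z y) :
    SB (f x) (f z) (f y) := by
  obtain ⟨F, hF, hF1, hF2⟩ := hf
  obtain ⟨a, c, b, h1, h2, h3, rfl, rfl, rfl⟩ := h
  refine ⟨F a, F c, F b, hF h1, hF h2, ?_, (hF2 a).symm, (hF2 c).symm, (hF2 b).symm⟩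
  rw [← hF1]
  exact hF h3

theorem SB_map_iff {f : C ≃ₜ C} (hf : OrientPreserving f) {x z y : C} :
    SB (f x) (f z) (f y) ↔ SB x z y := by
  refine ⟨fun h => ?_, SB_map hf⟩
  obtain ⟨h1, h2, h3⟩ := SB_ne h
  rcases SB_total (x := x) (z := z) (y := y) (fun e => h1 (by rw [e])) (fun e => h2 (by rw [e]))
    (fun e => h3 (by rw [e])) with h' | h'
  · exact h'
  · exact (SB_disj h (SB_map hf h')).elim

theorem image_arc {f : C ≃ₜ C} (hf : OrientPreserving f) (x y : C) :
    f '' arc x y = arc (f x) (f y) := by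
  ext w
  constructor
  · rintro ⟨z, hz, rfl⟩
    exact SB_map hf hz
  · intro hw
    obtain ⟨z, rfl⟩ := f.surjective w
    exact ⟨z, (SB_map_iff hf).1 hw, rfl⟩

theorem arc_ball {x y : C} (h : x ≠ y) : ∃ (m : C) (r : ℝ), 0 < r ∧ Metric.ball m r ⊆ arc x y ∧
    arc x y ⊆ Metric.closedBall m r ∧ dist x y ≤ 2 * r := by
  obtain ⟨a, -, rfl⟩ := exists_lift x 0
  obtain ⟨b, hb1, hb2, rfl⟩ := lift_pair h a rfl
  refine ⟨((a + b) / 2 : ℝ), (b - a) / 2, by linarith, ?_, ?_, ?_⟩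
  · intro z hz
    obtain ⟨c, rfl, hc⟩ := exists_lift_dist z ((a + b) / 2)
    rw [Metric.mem_ball, ← hc, abs_lt] at hz
    exact (SB_lift hb1 hb2 _).2 ⟨c, by linarith, by linarith, rfl⟩
  · intro z hz
    obtain ⟨c, h1, h2, rfl⟩ := (SB_lift hb1 hb2 _).1 hz
    rw [Metric.mem_closedBall]
    refine (dist_coe_le _ _).trans ?_
    rw [abs_le]
    constructor <;> linarith
  · refine (dist_coe_le _ _).trans ?_
    rw [abs_le]
    constructor <;> linarith

theorem arc_nhds (x : C) {V : Set C} (hV : IsOpen V) (hx : x ∈ V) :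
    ∃ x' y', SB x' x y' ∧ arc x' y' ⊆ V := by
  obtain ⟨r, hr, hb⟩ := Metric.isOpen_iff.1 hV x hx
  obtain ⟨a, -, rfl⟩ := exists_lift x 0
  set s := min r 1 / 3 with hs
  have hs0 : 0 < s := by positivity
  have hs1 : s ≤ 1 / 3 := by have := min_le_right r 1; rw [hs]; linarith
  have hs2 : s < r := by
    have := min_le_left r 1
    have h2 : 0 < min r 1 := by positivity
    rw [hs]; linarith
  refine ⟨(a - s : ℝ), (a + s : ℝ), ⟨a - s, a, a + s, by linarith, by linarith, by linarith,
    rfl, rfl, rfl⟩, ?_⟩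
  intro z hz
  obtain ⟨c, h1, h2, rfl⟩ := (SB_lift (by linarith) (by linarith) _).1 hz
  apply hb
  rw [Metric.mem_ball]
  refine (dist_coe_le _ _).trans_lt ?_
  rw [abs_lt]
  constructor <;> linarith

theorem arc_self (x : C) : arc x x = ∅ := by
  ext z
  simp only [arc, Set.mem_ofPred_eq, mem_empty_iff_false, iff_false]
  intro h
  exact (SB_ne h).1 rfl

theorem arc_small (x : C) {V : Set C} (hV : IsOpen V) (hx : x ∈ V) :
    ∀ᶠ p : C × C in 𝓝 (x, x), arc p.1 p.2 ⊆ V ∨ arc p.2 p.1 ⊆ V := by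
  obtain ⟨r, hr, hb⟩ := Metric.isOpen_iff.1 hV x hx
  obtain ⟨a, -, rfl⟩ := exists_lift x 0
  set s := min r 1 / 3 with hs
  have hs0 : 0 < s := by positivity
  have hs1 : s ≤ 1 / 3 := by have := min_le_right r 1; rw [hs]; linarith
  have hs2 : s < r := by
    have := min_le_left r 1
    have h2 : 0 < min r 1 := by positivity
    rw [hs]; linarith
  have hn : Metric.ball ((a : ℝ) : C) s ×ˢ Metric.ball ((a : ℝ) : C) s ∈ 𝓝 ((a : C), (a : C)) :=
    prod_mem_nhds (Metric.ball_mem_nhds _ hs0) (Metric.ball_mem_nhds _ hs0)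
  have key : ∀ b c : ℝ, |b - a| < s → |c - a| < s → b < c → arc (b : C) c ⊆ V := by
    intro b c h1 h2 hbc z hz
    rw [abs_lt] at h1 h2
    obtain ⟨e, h1, h2, rfl⟩ := (SB_lift hbc (by linarith) _).1 hz
    apply hb
    rw [Metric.mem_ball]
    refine (dist_coe_le _ _).trans_lt ?_
    rw [abs_lt]
    constructor <;> linarith
  filter_upwards [hn] with p hp
  obtain ⟨p, q⟩ := p
  obtain ⟨b, rfl, hbd⟩ := exists_lift_dist p a
  obtain ⟨c, rfl, hcd⟩ := exists_lift_dist q a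
  have h1 : |b - a| < s := by rw [hbd]; exact hp.1
  have h2 : |c - a| < s := by rw [hcd]; exact hp.2
  rcases lt_trichotomy b c with h | h | h
  · exact Or.inl (key b c h1 h2 h)
  · subst h
    left
    simp only
    rw [arc_self]
    exact empty_subset _
  · exact Or.inr (key c b h2 h1 h)

end SyncAux


namespace SyncAux

/-- the `ρ`-mass of the open arc from `z.1` to `z.2` -/
def J (ρ : Measure C) (z : C × C) : ℝ := ρ.real (arc z.1 z.2)

theorem J_nonneg (ρ : Measure C) (z : C × C) : 0 ≤ J ρ z := measureReal_nonneg

theorem J_le_one (ρ : Measure C) [IsProbabilityMeasure ρ] (z : C × C) : J ρ z ≤ 1 :=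
  measureReal_le_one

theorem J_diag (ρ : Measure C) (x : C) : J ρ (x, x) = 0 := by
  simp [J, arc_self]

theorem J_pos (ρ : Measure C) [IsProbabilityMeasure ρ] (hfull : FullSupport ρ) {z : C × C}
    (h : z.1 ≠ z.2) : 0 < J ρ z := by
  obtain ⟨m, r, hr, hb, -, -⟩ := arc_ball h
  have := hfull _ (isOpen_arc z.1 z.2) ⟨m, hb (Metric.mem_ball_self hr)⟩
  exact ENNReal.toReal_pos this.ne' (measure_ne_top _ _)

theorem J_add_swap (ρ : Measure C) [IsProbabilityMeasure ρ] (hat : Atomless ρ) {z : C × C}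
    (h : z.1 ≠ z.2) : J ρ z + J ρ z.swap = 1 := by
  obtain ⟨x, y⟩ := z
  simp only [J, Prod.swap] at *
  rw [← measureReal_union]
  · have hc : ρ (arc x y ∪ arc y x)ᶜ = 0 := by
      refine measure_mono_null (t := {x} ∪ {y}) ?_ (measure_union_null (hat x) (hat y))
      intro w hw
      by_contra hc
      simp at hc
      rcases SB_total h (Ne.symm hc.2) hc.1 with h' | h'
      · exact hw (Or.inl h')
      · exact hw (Or.inr h')
    have := (prob_compl_eq_zero_iff ((isOpen_arc x y).union (isOpen_arc y x)).measurableSet).1 hc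
    simp [Measure.real, this]
  · rw [Set.disjoint_left]
    intro w h1 h2
    exact SB_disj h1 h2
  · exact (isOpen_arc y x).measurableSet

theorem J_tendsto (ρ : Measure C) [IsProbabilityMeasure ρ] (hat : Atomless ρ) {z : C × C}
    (h : z.1 ≠ z.2) : ContinuousAt (J ρ) z := by
  have e : ∀ w, J ρ w = ∫ c, (arc w.1 w.2).indicator (fun _ => (1 : ℝ)) c ∂ρ := by
    intro w
    rw [integral_indicator_const _ (isOpen_arc _ _).measurableSet]
    simp [J]
  have e' : J ρ = fun w => ∫ c, (arc w.1 w.2).indicator (fun _ => (1 : ℝ)) c ∂ρ := funext e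
  rw [e']
  apply tendsto_integral_filter_of_dominated_convergence (fun _ => (1 : ℝ))
  · exact Eventually.of_forall fun w =>
      (measurable_const.indicator (isOpen_arc _ _).measurableSet).aestronglyMeasurable
  · refine Eventually.of_forall fun w => Eventually.of_forall fun c => ?_
    by_cases hc : c ∈ arc w.1 w.2 <;> simp [hc]
  · exact integrable_const _
  · have h1 : ∀ᵐ c ∂ρ, c ≠ z.1 := by
      rw [ae_iff]; simpa using hat z.1
    have h2 : ∀ᵐ c ∂ρ, c ≠ z.2 := by
      rw [ae_iff]; simpa using hat z.2
    filter_upwards [h1, h2] with c hc1 hc2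
    apply Tendsto.congr' _ tendsto_const_nhds
    have o1 : IsOpen {w : C × C | SB w.1 c w.2} :=
      isOpen_SB.preimage (f := fun w : C × C => (w.1, c, w.2)) (by fun_prop)
    have o2 : IsOpen {w : C × C | SB w.2 c w.1} :=
      isOpen_SB.preimage (f := fun w : C × C => (w.2, c, w.1)) (by fun_prop)
    rcases SB_total h (Ne.symm hc1) hc2 with h' | h'
    · filter_upwards [o1.mem_nhds h'] with w hw
      have a1 : c ∈ arc w.1 w.2 := hw
      have a2 : c ∈ arc z.1 z.2 := h'
      simp [a1, a2]
    · filter_upwards [o2.mem_nhds h'] with w hw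
      have a1 : c ∉ arc w.1 w.2 := fun hh => SB_disj hh hw
      have a2 : c ∉ arc z.1 z.2 := fun hh => SB_disj hh h'
      simp [a1, a2]

theorem J_measurable (ρ : Measure C) [IsProbabilityMeasure ρ] : Measurable (J ρ) := by
  have hm : MeasurableSet {p : (C × C) × C | SB p.1.1 p.2 p.1.2} := by
    apply IsOpen.measurableSet
    exact isOpen_SB.preimage (f := fun p : (C × C) × C => (p.1.1, p.2, p.1.2)) (by fun_prop)
  exact (measurable_measure_prodMk_left (ν := ρ) hm).ennreal_toReal

/-- symmetric Lyapunov function -/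
def Phi (ρ : Measure C) (z : C × C) : ℝ := J ρ z * J ρ z.swap

theorem Phi_nonneg (ρ : Measure C) (z : C × C) : 0 ≤ Phi ρ z :=
  mul_nonneg (J_nonneg _ _) (J_nonneg _ _)

theorem Phi_le_one (ρ : Measure C) [IsProbabilityMeasure ρ] (z : C × C) : Phi ρ z ≤ 1 :=
  mul_le_one₀ (J_le_one _ _) (J_nonneg _ _) (J_le_one _ _)

theorem Phi_diag (ρ : Measure C) {z : C × C} (h : z.1 = z.2) : Phi ρ z = 0 := by
  obtain ⟨x, y⟩ := z
  simp only at h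
  subst h
  simp [Phi, J_diag]

theorem Phi_pos (ρ : Measure C) [IsProbabilityMeasure ρ] (hfull : FullSupport ρ) {z : C × C}
    (h : z.1 ≠ z.2) : 0 < Phi ρ z :=
  mul_pos (J_pos ρ hfull h) (J_pos ρ hfull (z := z.swap) h.symm)

theorem exists_small_nhd (ρ : Measure C) [IsProbabilityMeasure ρ] (hat : Atomless ρ) (x : C)
    {ε : ℝ} (hε : 0 < ε) : ∃ V : Set C, IsOpen V ∧ x ∈ V ∧ ρ.real V < ε := by
  have : ρ {x} < ENNReal.ofReal ε := by rw [hat x]; simpa using hε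
  obtain ⟨V, hV, hVo, hlt⟩ := Set.exists_isOpen_lt_of_lt {x} _ this
  refine ⟨V, hVo, hV rfl, ?_⟩
  rw [Measure.real]
  exact (ENNReal.lt_ofReal_iff_toReal_lt (measure_ne_top _ _)).1 hlt

theorem Phi_continuous (ρ : Measure C) [IsProbabilityMeasure ρ] (hat : Atomless ρ) :
    Continuous (Phi ρ) := by
  rw [continuous_iff_continuousAt]
  intro z
  by_cases h : z.1 = z.2
  · obtain ⟨x, y⟩ := z
    simp only at h
    subst h
    rw [ContinuousAt, Phi_diag ρ rfl, Metric.tendsto_nhds]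
    intro ε hε
    obtain ⟨V, hV, hx, hlt⟩ := exists_small_nhd ρ hat x hε
    filter_upwards [arc_small x hV hx] with p hp
    rw [Real.dist_eq, sub_zero, abs_of_nonneg (Phi_nonneg _ _)]
    have n1 := J_nonneg ρ p
    have n2 := J_nonneg ρ p.swap
    have n3 := J_le_one ρ p
    have n4 := J_le_one ρ p.swap
    rcases hp with hp | hp
    · have : J ρ p ≤ ρ.real V := measureReal_mono hp
      unfold Phi; nlinarith
    · have : J ρ p.swap ≤ ρ.real V := measureReal_mono hp
      unfold Phi; nlinarith
  · have h1 := J_tendsto ρ hat h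
    have h2 : ContinuousAt (J ρ) z.swap := J_tendsto ρ hat (z := z.swap) (Ne.symm h)
    exact h1.mul (ContinuousAt.comp (f := Prod.swap) h2 continuous_swap.continuousAt)

theorem exists_ball_lower (ρ : Measure C) [IsProbabilityMeasure ρ] (hfull : FullSupport ρ)
    {s : ℝ} (hs : 0 < s) : ∃ δ > 0, ∀ m : C, δ ≤ ρ.real (Metric.ball m s) := by
  obtain ⟨t, -, htf, hcov⟩ := (isCompact_univ (X := C)).finite_cover_balls (half_pos hs)
  have hpos : ∀ c : C, 0 < ρ.real (Metric.ball c (s / 2)) := fun c =>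
    ENNReal.toReal_pos (hfull _ Metric.isOpen_ball
      ⟨c, Metric.mem_ball_self (half_pos hs)⟩).ne' (measure_ne_top _ _)
  have hne : t.Nonempty := by
    obtain ⟨c, hc, -⟩ := mem_iUnion₂.1 (hcov (mem_univ (0 : C)))
    exact ⟨c, hc⟩
  obtain ⟨c0, hc0, hmin⟩ := htf.exists_minimalFor (fun c => ρ.real (Metric.ball c (s / 2))) t hne
  refine ⟨_, hpos c0, fun m => ?_⟩
  obtain ⟨c, hc, hmc⟩ := mem_iUnion₂.1 (hcov (mem_univ m))
  have h1 : ρ.real (Metric.ball c0 (s / 2)) ≤ ρ.real (Metric.ball c (s / 2)) := by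
    rcases le_total (ρ.real (Metric.ball c0 (s / 2))) (ρ.real (Metric.ball c (s / 2))) with h | h
    · exact h
    · exact hmin hc h
  refine h1.trans (measureReal_mono ?_)
  apply Metric.ball_subset_ball'
  rw [Metric.mem_ball, dist_comm] at hmc
  linarith

theorem J_small (ρ : Measure C) [IsProbabilityMeasure ρ] (hfull : FullSupport ρ)
    {ε : ℝ} (hε : 0 < ε) : ∃ δ > 0, ∀ z : C × C, J ρ z < δ →
      volume (arc z.1 z.2) ≤ ENNReal.ofReal ε ∧ dist z.1 z.2 ≤ ε := by
  obtain ⟨δ, hδ, hb⟩ := exists_ball_lower ρ hfull (half_pos hε)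
  refine ⟨δ, hδ, fun z hz => ?_⟩
  by_cases h : z.1 = z.2
  · rw [h, arc_self]; simp [hε.le]
  · obtain ⟨m, r, hr, h1, h2, h3⟩ := arc_ball h
    have hrε : r < ε / 2 := by
      by_contra hc
      push Not at hc
      have : ρ.real (Metric.ball m (ε / 2)) ≤ J ρ z :=
        measureReal_mono ((Metric.ball_subset_ball hc).trans h1)
      linarith [hb m]
    refine ⟨(measure_mono h2).trans ?_, by linarith⟩
    rw [AddCircle.volume_closedBall]
    apply ENNReal.ofReal_le_ofReal
    exact (min_le_right _ _).trans (by linarith)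

end SyncAux


namespace SyncAux

theorem lint_indep {Ω Ω' Z : Type} [MeasurableSpace Ω] [MeasurableSpace Ω'] [MeasurableSpace Z]
    (P : Measure Ω) [IsProbabilityMeasure P] (v : Ω → Ω') (u : Ω → Z) (hv : Measurable v)
    (hu : Measurable u)
    (hind : ∀ (E : Set Z) (A : Set Ω'), MeasurableSet E → MeasurableSet A →
      P (u ⁻¹' E ∩ v ⁻¹' A) = P (u ⁻¹' E) * P (v ⁻¹' A))
    (G : Ω' × Z → ℝ≥0∞) (hG : Measurable G) :
    ∫⁻ ω, G (v ω, u ω) ∂P = ∫⁻ ω, ∫⁻ ω', G (v ω', u ω) ∂P ∂P := by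
  have hi : ProbabilityTheory.IndepFun u v P :=
    (ProbabilityTheory.indepFun_iff_measure_inter_preimage_eq_mul).2 fun E A hE hA => hind E A hE hA
  have hmap := (ProbabilityTheory.indepFun_iff_map_prod_eq_prod_map_map hu.aemeasurable
    hv.aemeasurable).1 hi
  have hG' : Measurable fun q : Z × Ω' => G (q.2, q.1) := hG.comp measurable_swap
  have hp1 := Measure.isProbabilityMeasure_map (μ := P) hu.aemeasurable
  have hp2 := Measure.isProbabilityMeasure_map (μ := P) hv.aemeasurable
  calc ∫⁻ ω, G (v ω, u ω) ∂P
      = ∫⁻ q, G (q.2, q.1) ∂(P.map fun ω => (u ω, v ω)) :=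
        (lintegral_map hG' (hu.prodMk hv)).symm
    _ = ∫⁻ z, ∫⁻ w, G (w, z) ∂(P.map v) ∂(P.map u) := by
        rw [hmap, lintegral_prod _ hG'.aemeasurable]
    _ = ∫⁻ ω, ∫⁻ w, G (w, u ω) ∂(P.map v) ∂P := by
        rw [lintegral_map (hG'.lintegral_prod_right') hu]
    _ = _ := by
        refine lintegral_congr fun ω => ?_
        exact lintegral_map (f := fun w => G (w, u ω))
          (hG.comp (measurable_id.prodMk measurable_const)) hv

theorem meas_pair {Ω : Type} [MeasurableSpace Ω] (f : Ω → C → C)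
    (h : Measurable fun p : Ω × C => f p.1 p.2) :
    Measurable fun p : Ω × (C × C) => (f p.1 p.2.1, f p.1 p.2.2) := by
  have h1 : Measurable fun p : Ω × (C × C) => f p.1 p.2.1 :=
    h.comp (measurable_fst.prodMk (measurable_fst.comp measurable_snd))
  have h2 : Measurable fun p : Ω × (C × C) => f p.1 p.2.2 :=
    h.comp (measurable_fst.prodMk (measurable_snd.comp measurable_snd))
  exact h1.prodMk h2

theorem meas_sec {Ω Z W : Type} [MeasurableSpace Ω] [MeasurableSpace Z] [MeasurableSpace W]
    (g : Ω × Z → W) (h : Measurable g) (z : Z) : Measurable fun ω => g (ω, z) :=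
  h.comp (measurable_id.prodMk measurable_const)

variable {Ω : Type} [mΩ : MeasurableSpace Ω] (S : RDS Ω)

theorem T_nat (n : ℕ) : (n : ℝ) ∈ S.T := by
  rcases S.T_cases with h | h <;> rw [h]
  · exact ⟨n, rfl⟩
  · simp

theorem T_zero : (0 : ℝ) ∈ S.T := by simpa using T_nat S 0

theorem T_add {s t : ℝ} (hs : s ∈ S.T) (ht : t ∈ S.T) : s + t ∈ S.T := by
  rcases S.T_cases with h | h <;> rw [h] at hs ht ⊢
  · obtain ⟨a, rfl⟩ := hs
    obtain ⟨b, rfl⟩ := ht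
    exact ⟨a + b, by simp⟩
  · simp at *; linarith

theorem T_nonneg {t : ℝ} (ht : t ∈ S.T) : 0 ≤ t := by
  rcases S.T_cases with h | h <;> rw [h] at ht
  · obtain ⟨a, rfl⟩ := ht
    simp
  · exact ht

theorem T_mul (k : ℕ) {h : ℝ} (hh : h ∈ S.T) : (k : ℝ) * h ∈ S.T := by
  induction k with
  | zero => simpa using T_zero S
  | succ k ih => push_cast; rw [add_mul, one_mul]; exact T_add S ih hh

theorem T_sub {s t : ℝ} (hs : s ∈ S.T) (ht : t ∈ S.T) (hst : s ≤ t) : t - s ∈ S.T := by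
  rcases S.T_cases with h | h <;> rw [h] at hs ht ⊢
  · obtain ⟨a, rfl⟩ := hs
    obtain ⟨b, rfl⟩ := ht
    have : a ≤ b := by simpa using hst
    exact ⟨b - a, by simp [Nat.cast_sub this]⟩
  · simp at *; linarith

/-- the two-point motion -/
def two (t : ℝ) (ω : Ω) (z : C × C) : C × C := (S.φ t ω z.1, S.φ t ω z.2)

theorem two_zero (ω : Ω) (z : C × C) : two S 0 ω z = z := by
  simp [two, S.φ_zero]

theorem two_add {s t : ℝ} (hs : s ∈ S.T) (ht : t ∈ S.T) (ω : Ω) (z : C × C) :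
    two S (s + t) ω z = two S t (S.θ s ω) (two S s ω z) := by
  simp [two, S.φ_cocycle s hs t ht]

theorem two_swap (t : ℝ) (ω : Ω) (z : C × C) : two S t ω z.swap = (two S t ω z).swap := rfl

theorem two_ne (t : ℝ) (ω : Ω) {z : C × C} (h : z.1 ≠ z.2) :
    (two S t ω z).1 ≠ (two S t ω z).2 := fun e => h ((S.φ t ω).injective e)

theorem two_cont (t : ℝ) (ω : Ω) : Continuous (two S t ω) := by
  unfold two
  exact ((S.φ t ω).continuous.comp continuous_fst).prodMk
    ((S.φ t ω).continuous.comp continuous_snd)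

theorem F_le_Fplus {t : ℝ} (ht : t ∈ S.T) : S.F t ≤ S.Fplus := le_iSup₂_of_le t ht le_rfl

theorem Fplus_le : S.Fplus ≤ mΩ := iSup₂_le fun t ht => S.F_le t ht

theorem two_meas_F {t : ℝ} (ht : t ∈ S.T) :
    @Measurable (Ω × (C × C)) (C × C) ((S.F t).prod inferInstance) inferInstance
      (fun p => two S t p.1 p.2) := by
  exact @meas_pair Ω (S.F t) (fun ω x => S.φ t ω x) (S.φ_meas t ht)

theorem two_meas_plus {t : ℝ} (ht : t ∈ S.T) :
    @Measurable (Ω × (C × C)) (C × C) (S.Fplus.prod inferInstance) inferInstance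
      (fun p => two S t p.1 p.2) := by
  refine (two_meas_F S ht).mono ?_ le_rfl
  exact sup_le_sup (MeasurableSpace.comap_mono (F_le_Fplus S ht)) le_rfl

theorem two_meas_z {t : ℝ} (ht : t ∈ S.T) (z : C × C) :
    @Measurable Ω (C × C) (S.F t) inferInstance (fun ω => two S t ω z) := by
  exact @meas_sec Ω (C × C) (C × C) (S.F t) _ _ _ (two_meas_F S ht) z

theorem two_meas {t : ℝ} (ht : t ∈ S.T) (z : C × C) : Measurable (fun ω => two S t ω z) :=
  (two_meas_z S ht z).mono (S.F_le t ht) le_rfl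

theorem markov {s : ℝ} (hs : s ∈ S.T) (z : C × C) (G : Ω × (C × C) → ℝ≥0∞)
    (hG : @Measurable (Ω × (C × C)) ℝ≥0∞ (S.Fplus.prod inferInstance) inferInstance G) :
    ∫⁻ ω, G (S.θ s ω, two S s ω z) ∂S.P = ∫⁻ ω, ∫⁻ ω', G (ω', two S s ω z) ∂S.P ∂S.P := by
  have := S.P_prob
  have hp := S.θ_preserving s hs
  have key := @lint_indep Ω Ω (C × C) mΩ S.Fplus inferInstance S.P S.P_prob (S.θ s)
    (fun ω => two S s ω z) (hp.measurable.mono le_rfl (Fplus_le S)) (two_meas S hs z)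
    (by
      intro E A hE hA
      have h1 := S.θ_indep s hs ((fun ω => two S s ω z) ⁻¹' E) A (two_meas_z S hs z hE) hA
      rw [h1, hp.measure_preimage (Fplus_le S A hA).nullMeasurableSet]) G hG
  rw [key]
  refine lintegral_congr fun ω => ?_
  have hGz : @Measurable Ω ℝ≥0∞ S.Fplus inferInstance (fun ω' => G (ω', two S s ω z)) := by
    exact @meas_sec Ω (C × C) ℝ≥0∞ S.Fplus _ _ _ hG _
  exact hp.lintegral_comp (hGz.mono (Fplus_le S) le_rfl)

theorem J_two (ρ : Measure C) {t : ℝ} (ht : t ∈ S.T) (ω : Ω) (z : C × C) :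
    J ρ (two S t ω z) = ρ.real (S.φ t ω '' arc z.1 z.2) := by
  rw [image_arc (S.φ_orient t ht ω)]; rfl

theorem lint_J (ρ : Measure C) [IsProbabilityMeasure ρ] (hstat : S.ReverseStationary ρ)
    {t : ℝ} (ht : t ∈ S.T) (z : C × C) :
    ∫⁻ ω, ENNReal.ofReal (J ρ (two S t ω z)) ∂S.P = ENNReal.ofReal (J ρ z) := by
  have := hstat t ht (arc z.1 z.2) (isOpen_arc _ _).measurableSet
  simp only [J_two S ρ ht]
  have e : ∀ A : Set C, ENNReal.ofReal (ρ.real A) = ρ A := fun A =>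
    ENNReal.ofReal_toReal (measure_ne_top _ _)
  simp only [J, e]
  exact this.symm

theorem int_J (ρ : Measure C) [IsProbabilityMeasure ρ] (hstat : S.ReverseStationary ρ)
    {t : ℝ} (ht : t ∈ S.T) (z : C × C) :
    ∫ ω, J ρ (two S t ω z) ∂S.P = J ρ z := by
  rw [integral_eq_lintegral_of_nonneg_ae (Eventually.of_forall fun _ => J_nonneg _ _)
    ((J_measurable ρ).comp (two_meas S ht z)).aestronglyMeasurable, lint_J S ρ hstat ht,
    ENNReal.toReal_ofReal (J_nonneg _ _)]

theorem J_integrable (ρ : Measure C) [IsProbabilityMeasure ρ] {t : ℝ} (ht : t ∈ S.T)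
    (z : C × C) : Integrable (fun ω => J ρ (two S t ω z)) S.P := by
  have := S.P_prob
  refine Integrable.of_bound ((J_measurable ρ).comp (two_meas S ht z)).aestronglyMeasurable 1 ?_
  refine Eventually.of_forall fun ω => ?_
  rw [Real.norm_eq_abs, abs_of_nonneg (J_nonneg _ _)]
  exact J_le_one _ _

/-- mean of `Phi` along the two-point motion -/
def PPhi (ρ : Measure C) (t : ℝ) (z : C × C) : ℝ := ∫ ω, Phi ρ (two S t ω z) ∂S.P

theorem Phi_meas (ρ : Measure C) [IsProbabilityMeasure ρ] : Measurable (Phi ρ) :=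
  (J_measurable ρ).mul ((J_measurable ρ).comp measurable_swap)

theorem Phi_integrable (ρ : Measure C) [IsProbabilityMeasure ρ] {t : ℝ} (ht : t ∈ S.T)
    (z : C × C) : Integrable (fun ω => Phi ρ (two S t ω z)) S.P := by
  have := S.P_prob
  refine Integrable.of_bound ((Phi_meas ρ).comp (two_meas S ht z)).aestronglyMeasurable 1 ?_
  refine Eventually.of_forall fun ω => ?_
  rw [Real.norm_eq_abs, abs_of_nonneg (Phi_nonneg _ _)]
  exact Phi_le_one _ _

theorem PPhi_cont (ρ : Measure C) [IsProbabilityMeasure ρ] (hat : Atomless ρ) {t : ℝ}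
    (ht : t ∈ S.T) : Continuous (PPhi S ρ t) := by
  have := S.P_prob
  refine continuous_of_dominated (bound := fun _ => 1) ?_ ?_ (integrable_const _) ?_
  · exact fun z => (Phi_integrable S ρ ht z).aestronglyMeasurable
  · intro z
    refine Eventually.of_forall fun ω => ?_
    rw [Real.norm_eq_abs, abs_of_nonneg (Phi_nonneg _ _)]
    exact Phi_le_one _ _
  · exact Eventually.of_forall fun ω => (Phi_continuous ρ hat).comp (two_cont S t ω)

theorem PPhi_lint (ρ : Measure C) [IsProbabilityMeasure ρ] {t : ℝ} (ht : t ∈ S.T) (z : C × C) :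
    ENNReal.ofReal (PPhi S ρ t z) = ∫⁻ ω, ENNReal.ofReal (Phi ρ (two S t ω z)) ∂S.P :=
  ofReal_integral_eq_lintegral_ofReal (Phi_integrable S ρ ht z)
    (Eventually.of_forall fun _ => Phi_nonneg _ _)

theorem PPhi_nonneg (ρ : Measure C) (t : ℝ) (z : C × C) : 0 ≤ PPhi S ρ t z :=
  integral_nonneg fun _ => Phi_nonneg _ _

theorem PPhi_le_one (ρ : Measure C) [IsProbabilityMeasure ρ] {t : ℝ} (ht : t ∈ S.T)
    (z : C × C) : PPhi S ρ t z ≤ 1 := by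
  have := S.P_prob
  calc PPhi S ρ t z ≤ ∫ _, (1 : ℝ) ∂S.P :=
        integral_mono (Phi_integrable S ρ ht z) (integrable_const _) fun _ => Phi_le_one _ _
    _ = 1 := by simp

theorem PPhi_integrable (ρ : Measure C) [IsProbabilityMeasure ρ] (hat : Atomless ρ) {s t : ℝ}
    (hs : s ∈ S.T) (ht : t ∈ S.T) (z : C × C) :
    Integrable (fun ω => PPhi S ρ t (two S s ω z)) S.P := by
  have := S.P_prob
  refine Integrable.of_bound
    ((PPhi_cont S ρ hat ht).measurable.comp (two_meas S hs z)).aestronglyMeasurable 1 ?_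
  refine Eventually.of_forall fun ω => ?_
  rw [Real.norm_eq_abs, abs_of_nonneg (PPhi_nonneg _ _ _ _)]
  exact PPhi_le_one _ _ ht _

theorem PPhi_add (ρ : Measure C) [IsProbabilityMeasure ρ] (hat : Atomless ρ) {s t : ℝ}
    (hs : s ∈ S.T) (ht : t ∈ S.T) (z : C × C) :
    PPhi S ρ (s + t) z = ∫ ω, PPhi S ρ t (two S s ω z) ∂S.P := by
  have h1 : ENNReal.ofReal (PPhi S ρ (s + t) z)
      = ENNReal.ofReal (∫ ω, PPhi S ρ t (two S s ω z) ∂S.P) := by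
    rw [PPhi_lint S ρ (T_add S hs ht), ofReal_integral_eq_lintegral_ofReal
      (PPhi_integrable S ρ hat hs ht z) (Eventually.of_forall fun _ => PPhi_nonneg _ _ _ _)]
    simp only [PPhi_lint S ρ ht, two_add S hs ht]
    refine markov S hs z (fun p => ENNReal.ofReal (Phi ρ (two S t p.1 p.2))) ?_
    exact ((Phi_meas ρ).ennreal_ofReal).comp (two_meas_plus S ht)
  rwa [ENNReal.ofReal_eq_ofReal_iff (PPhi_nonneg _ _ _ _)
    (integral_nonneg fun _ => PPhi_nonneg _ _ _ _)] at h1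

/-- drop of the Lyapunov function is the variance -/
theorem drop_eq (ρ : Measure C) [IsProbabilityMeasure ρ] (hat : Atomless ρ)
    (hstat : S.ReverseStationary ρ) {t : ℝ} (ht : t ∈ S.T) {z : C × C} (hz : z.1 ≠ z.2) :
    Phi ρ z - PPhi S ρ t z = ∫ ω, (J ρ (two S t ω z) - J ρ z) ^ 2 ∂S.P := by
  have := S.P_prob
  have e : ∀ w : C × C, w.1 ≠ w.2 → Phi ρ w = J ρ w - J ρ w ^ 2 := by
    intro w hw
    have := J_add_swap ρ hat hw
    rw [Phi, show J ρ w.swap = 1 - J ρ w by linarith]; ring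
  have e1 : ∀ ω, (J ρ (two S t ω z) - J ρ z) ^ 2
      = J ρ (two S t ω z) - Phi ρ (two S t ω z) - 2 * J ρ z * J ρ (two S t ω z) + J ρ z ^ 2 := by
    intro ω
    rw [e _ (two_ne S t ω hz)]; ring
  simp only [e1]
  have i1 := J_integrable S ρ ht z
  have i2 := Phi_integrable S ρ ht z
  have i3 : Integrable (fun ω => J ρ (two S t ω z) - Phi ρ (two S t ω z)) S.P := i1.sub i2
  have i4 : Integrable (fun ω => 2 * J ρ z * J ρ (two S t ω z)) S.P := i1.const_mul _
  have i5 : Integrable (fun ω => J ρ (two S t ω z) - Phi ρ (two S t ω z)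
      - 2 * J ρ z * J ρ (two S t ω z)) S.P := i3.sub i4
  rw [integral_add i5 (integrable_const _),
    integral_sub i3 i4, integral_sub i1 i2, integral_const_mul,
    int_J S ρ hstat ht, e z hz, PPhi]
  simp
  ring

theorem drop_nonneg (ρ : Measure C) [IsProbabilityMeasure ρ] (hat : Atomless ρ)
    (hstat : S.ReverseStationary ρ) {t : ℝ} (ht : t ∈ S.T) (z : C × C) :
    PPhi S ρ t z ≤ Phi ρ z := by
  by_cases hz : z.1 = z.2
  · rw [Phi_diag ρ hz]
    have : ∀ ω, Phi ρ (two S t ω z) = 0 := fun ω => Phi_diag ρ (by simp [two, hz])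
    simp [PPhi, this]
  · have := drop_eq S ρ hat hstat ht hz
    have h2 : 0 ≤ ∫ ω, (J ρ (two S t ω z) - J ρ z) ^ 2 ∂S.P := integral_nonneg fun _ => sq_nonneg _
    linarith

theorem PPhi_anti (ρ : Measure C) [IsProbabilityMeasure ρ] (hat : Atomless ρ)
    (hstat : S.ReverseStationary ρ) {s t : ℝ} (hs : s ∈ S.T) (ht : t ∈ S.T) (hst : s ≤ t)
    (z : C × C) : PPhi S ρ t z ≤ PPhi S ρ s z := by
  have hd := T_sub S hs ht hst
  have : t = s + (t - s) := by ring
  rw [this, PPhi_add S ρ hat hs hd]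
  exact integral_mono (PPhi_integrable S ρ hat hs hd z) (Phi_integrable S ρ hs z)
    fun ω => drop_nonneg S ρ hat hstat hd _

end SyncAux


namespace SyncAux

variable {Ω : Type} [mΩ : MeasurableSpace Ω] (S : RDS Ω)

theorem exists_steps : ∃ h : ℕ → ℝ, (∀ m, h m ∈ S.T) ∧ (∀ m, ∃ q : ℕ, h m = q * h (m + 1)) ∧
    ∀ t ∈ S.T, ∃ k : ℕ → ℕ, Antitone (fun m => (k m : ℝ) * h m) ∧
      Tendsto (fun m => (k m : ℝ) * h m) atTop (𝓝 t) := by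
  rcases S.T_cases with hT | hT
  · refine ⟨fun _ => 1, fun _ => by simpa using T_nat S 1, fun _ => ⟨1, by simp⟩, ?_⟩
    intro t ht
    rw [hT] at ht
    obtain ⟨n, rfl⟩ := ht
    exact ⟨fun _ => n, fun _ _ _ => by simp, by simp⟩
  · refine ⟨fun m => (1 / 2) ^ m, fun m => ?_, fun m => ⟨2, ?_⟩, ?_⟩
    · rw [hT]; simp
    · push_cast; rw [pow_succ]; ring
    · intro t ht
      have ht0 := T_nonneg S ht
      have hp : ∀ m : ℕ, (2 : ℝ) ^ m * (1 / 2) ^ m = 1 := fun m => by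
        rw [← mul_pow]; norm_num
      refine ⟨fun m => ⌈t * 2 ^ m⌉₊, ?_, ?_⟩
      · apply antitone_nat_of_succ_le
        intro m
        have h1 : ⌈t * 2 ^ (m + 1)⌉₊ ≤ 2 * ⌈t * 2 ^ m⌉₊ := by
          rw [Nat.ceil_le]
          push_cast
          have := Nat.le_ceil (t * 2 ^ m)
          rw [pow_succ]; linarith
        have h2 : (⌈t * 2 ^ (m + 1)⌉₊ : ℝ) ≤ 2 * ⌈t * 2 ^ m⌉₊ := by exact_mod_cast h1
        have h3 : (0 : ℝ) < (1 / 2) ^ m := by positivity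
        simp only [pow_succ (1 / 2 : ℝ)]
        nlinarith
      · have l1 : Tendsto (fun m : ℕ => t + (1 / 2 : ℝ) ^ m) atTop (𝓝 t) := by
          have := tendsto_pow_atTop_nhds_zero_of_lt_one (r := (1 / 2 : ℝ)) (by norm_num)
            (by norm_num)
          simpa using this.const_add t
        refine tendsto_of_tendsto_of_tendsto_of_le_of_le tendsto_const_nhds l1 ?_ ?_
        · intro m
          have h3 : (0 : ℝ) < (1 / 2) ^ m := by positivity
          have := mul_le_mul_of_nonneg_right (Nat.le_ceil (t * 2 ^ m)) h3.le
          rw [mul_assoc, hp] at this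
          simpa using this
        · intro m
          have h3 : (0 : ℝ) < (1 / 2) ^ m := by positivity
          have := mul_le_mul_of_nonneg_right
            (Nat.ceil_lt_add_one (a := t * 2 ^ m) (by positivity)).le h3.le
          rw [add_mul, mul_assoc, hp] at this
          simpa using this

/-- mesh sizes of a countable dense set of times -/
def step : ℕ → ℝ := (exists_steps S).choose

theorem step_mem (m : ℕ) : step S m ∈ S.T := (exists_steps S).choose_spec.1 m

theorem step_dvd (m : ℕ) : ∃ q : ℕ, step S m = q * step S (m + 1) :=
  (exists_steps S).choose_spec.2.1 m

theorem step_approx {t : ℝ} (ht : t ∈ S.T) (ω : Ω) (z : C × C) {V : Set (C × C)}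
    (hV : V ∈ 𝓝 (two S t ω z)) : ∃ m k : ℕ, two S (k * step S m) ω z ∈ V := by
  obtain ⟨k, hk1, hk2⟩ := (exists_steps S).choose_spec.2.2 t ht
  have h1 := S.φ_cadlag_right ω t ht _ (fun m => T_mul S (k m) (step_mem S m)) hk1 hk2
    (fun _ => z.1) z.1 tendsto_const_nhds
  have h2 := S.φ_cadlag_right ω t ht _ (fun m => T_mul S (k m) (step_mem S m)) hk1 hk2
    (fun _ => z.2) z.2 tendsto_const_nhds
  have h3 := h1.prodMk_nhds h2
  obtain ⟨m, hm⟩ := (h3.eventually hV).exists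
  exact ⟨m, k m, hm⟩

theorem ind_meas {X : Type} [MeasurableSpace X] {A : Set X} (hA : MeasurableSet A) :
    Measurable (A.indicator (fun _ => (1 : ℝ≥0∞))) := measurable_const.indicator hA

theorem pair_meas {X Y Z : Type} [MeasurableSpace X] [MeasurableSpace Y] [MeasurableSpace Z]
    {f : X → Y} {g : X → Z} (hf : Measurable f) (hg : Measurable g) :
    Measurable (fun x => (f x, g x)) := hf.prodMk hg

theorem sec_meas {X Y : Type} [MeasurableSpace X] [MeasurableSpace Y] {A : Set (X × Y)}
    (hA : MeasurableSet A) (y : Y) : MeasurableSet {x | (x, y) ∈ A} := measurable_prodMk_right hA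

theorem markov_set {s : ℝ} (hs : s ∈ S.T) (z : C × C) {A : Set (Ω × (C × C))}
    (hA : @MeasurableSet (Ω × (C × C)) (S.Fplus.prod inferInstance) A) :
    S.P {ω | (S.θ s ω, two S s ω z) ∈ A}
      = ∫⁻ ω, S.P {ω' | (ω', two S s ω z) ∈ A} ∂S.P := by
  have hm : MeasurableSet {ω | (S.θ s ω, two S s ω z) ∈ A} :=
    (@pair_meas Ω Ω (C × C) mΩ S.Fplus _ _ _ ((S.θ_preserving s hs).measurable.mono le_rfl
      (Fplus_le S)) (two_meas S hs z)) hA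
  have key := markov S hs z (A.indicator (fun _ => 1))
    (@ind_meas (Ω × (C × C)) (S.Fplus.prod inferInstance) A hA)
  calc S.P {ω | (S.θ s ω, two S s ω z) ∈ A}
      = ∫⁻ ω, {ω | (S.θ s ω, two S s ω z) ∈ A}.indicator 1 ω ∂S.P :=
        (lintegral_indicator_one hm).symm
    _ = _ := key
    _ = _ := by
        refine lintegral_congr fun ω => ?_
        exact lintegral_indicator_one (Fplus_le S _ (@sec_meas Ω (C × C) S.Fplus _ A hA _))

def bad (ρ : Measure C) (l h : ℝ) (n : ℕ) (z : C × C) : Set Ω :=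
  {ω | ∃ k ≤ n, l < J ρ (two S (k * h) ω z)}

theorem bad_meas (ρ : Measure C) [IsProbabilityMeasure ρ] (l : ℝ) {h : ℝ} (hh : h ∈ S.T)
    (n : ℕ) : @MeasurableSet (Ω × (C × C)) (S.Fplus.prod inferInstance)
      {p | p.1 ∈ bad S ρ l h n p.2} := by
  have e : {p : Ω × (C × C) | p.1 ∈ bad S ρ l h n p.2}
      = ⋃ k : ℕ, ⋃ _ : k ≤ n, {p | l < J ρ (two S (k * h) p.1 p.2)} := by
    ext p; simp [bad]
  rw [e]
  refine MeasurableSet.iUnion fun k => MeasurableSet.iUnion fun _ => ?_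
  exact ((J_measurable ρ).comp (two_meas_plus S (T_mul S k hh))) measurableSet_Ioi

theorem bad_trivial (ρ : Measure C) {l : ℝ} (hl : 0 < l) {z : C × C} (hz : l < J ρ z)
    (A : Set Ω) : S.P A ≤ ENNReal.ofReal (J ρ z / l) := by
  have := S.P_prob
  refine prob_le_one.trans ?_
  rw [ENNReal.one_le_ofReal, le_div_iff₀ hl]
  linarith

theorem bad_le (ρ : Measure C) [IsProbabilityMeasure ρ] (hstat : S.ReverseStationary ρ)
    {l : ℝ} (hl : 0 < l) {h : ℝ} (hh : h ∈ S.T) (n : ℕ) :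
    ∀ z : C × C, S.P (bad S ρ l h n z) ≤ ENNReal.ofReal (J ρ z / l) := by
  induction n with
  | zero =>
    intro z
    by_cases hz : l < J ρ z
    · exact bad_trivial S ρ hl hz _
    · have : bad S ρ l h 0 z = ∅ := by
        ext ω
        simp only [bad, Set.mem_ofPred_eq, Set.mem_empty_iff_false, iff_false]
        rintro ⟨k, hk, hk2⟩
        have : k = 0 := by omega
        subst this
        simp [two_zero] at hk2
        exact hz hk2
      rw [this]; simp
  | succ n ih =>
    intro z
    by_cases hz : l < J ρ z
    · exact bad_trivial S ρ hl hz _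
    have hsub : bad S ρ l h (n + 1) z ⊆ {ω | S.θ h ω ∈ bad S ρ l h n (two S h ω z)} := by
      rintro ω ⟨k, hk, hk2⟩
      rcases k with _ | k
      · simp [two_zero] at hk2
        exact absurd hk2 hz
      · refine ⟨k, by omega, ?_⟩
        rw [← two_add S hh (T_mul S k hh)]
        have : ((k + 1 : ℕ) : ℝ) * h = h + k * h := by push_cast; ring
        rwa [this] at hk2
    have hbm := bad_meas S ρ l hh n
    calc S.P (bad S ρ l h (n + 1) z)
        ≤ S.P {ω | S.θ h ω ∈ bad S ρ l h n (two S h ω z)} := measure_mono hsub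
      _ = ∫⁻ ω, S.P (bad S ρ l h n (two S h ω z)) ∂S.P := markov_set S hh z hbm
      _ ≤ ∫⁻ ω, ENNReal.ofReal (J ρ (two S h ω z)) * ENNReal.ofReal l⁻¹ ∂S.P := by
          refine lintegral_mono fun ω => ?_
          rw [← ENNReal.ofReal_mul (J_nonneg _ _)]
          exact ih _
      _ = ENNReal.ofReal (J ρ z / l) := by
          rw [lintegral_mul_const' _ _ ENNReal.ofReal_ne_top, lint_J S ρ hstat hh,
            ← ENNReal.ofReal_mul (J_nonneg _ _)]
          rfl

def badU (ρ : Measure C) (l : ℝ) (z : C × C) : Set Ω := ⋃ m : ℕ, ⋃ n : ℕ, bad S ρ l (step S m) n z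

theorem badU_le (ρ : Measure C) [IsProbabilityMeasure ρ] (hstat : S.ReverseStationary ρ)
    {l : ℝ} (hl : 0 < l) (z : C × C) : S.P (badU S ρ l z) ≤ ENNReal.ofReal (J ρ z / l) := by
  unfold badU
  have mono1 : Monotone fun m : ℕ => ⋃ n : ℕ, bad S ρ l (step S m) n z := by
    apply monotone_nat_of_le_succ
    intro m ω hω
    obtain ⟨n, k, hk, hk2⟩ := mem_iUnion.1 hω
    obtain ⟨q, hq⟩ := step_dvd S m
    refine mem_iUnion.2 ⟨k * q, k * q, le_rfl, ?_⟩
    have : ((k * q : ℕ) : ℝ) * step S (m + 1) = k * step S m := by rw [hq]; push_cast; ring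
    rwa [this]
  rw [mono1.measure_iUnion]
  refine iSup_le fun m => ?_
  have mono2 : Monotone fun n : ℕ => bad S ρ l (step S m) n z := by
    rintro a b hab ω ⟨k, hk, hk2⟩
    exact ⟨k, hk.trans hab, hk2⟩
  rw [mono2.measure_iUnion]
  exact iSup_le fun n => bad_le S ρ hstat hl (step_mem S m) n z

theorem badU_meas (ρ : Measure C) [IsProbabilityMeasure ρ] (l : ℝ) :
    @MeasurableSet (Ω × (C × C)) (S.Fplus.prod inferInstance) {p | p.1 ∈ badU S ρ l p.2} := by
  have e : {p : Ω × (C × C) | p.1 ∈ badU S ρ l p.2}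
      = ⋃ m : ℕ, ⋃ n : ℕ, {p | p.1 ∈ bad S ρ l (step S m) n p.2} := by
    ext p; simp [badU]
  rw [e]
  exact MeasurableSet.iUnion fun m => MeasurableSet.iUnion fun n =>
    bad_meas S ρ l (step_mem S m) n

theorem mem_badU (ρ : Measure C) [IsProbabilityMeasure ρ] (hat : Atomless ρ) {l : ℝ}
    (hl : 0 < l) {z : C × C} {ω : Ω} {t : ℝ} (ht : t ∈ S.T) (h : l < J ρ (two S t ω z)) :
    ω ∈ badU S ρ l z := by
  have hne : (two S t ω z).1 ≠ (two S t ω z).2 := by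
    intro e
    have : two S t ω z = ((two S t ω z).1, (two S t ω z).1) := Prod.ext rfl e.symm
    rw [this, J_diag] at h
    linarith
  have hc := J_tendsto ρ hat hne
  obtain ⟨m, k, hk⟩ := step_approx S ht ω z (hc.eventually (lt_mem_nhds h))
  exact mem_iUnion.2 ⟨m, mem_iUnion.2 ⟨k, k, le_rfl, hk⟩⟩

theorem max_ineq (ρ : Measure C) [IsProbabilityMeasure ρ] (hat : Atomless ρ)
    (hstat : S.ReverseStationary ρ) {l ε : ℝ} (hl : 0 < l) {s : ℝ} (hs : s ∈ S.T) (z : C × C) :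
    S.P {ω | J ρ (two S s ω z) ≤ ε ∧ ∃ t ∈ S.T, l < J ρ (two S (s + t) ω z)}
      ≤ ENNReal.ofReal (ε / l) := by
  have := S.P_prob
  let A : Set (Ω × (C × C)) := {p | p.1 ∈ badU S ρ l p.2} ∩ {p | J ρ p.2 ≤ ε}
  have hA : @MeasurableSet (Ω × (C × C)) (S.Fplus.prod inferInstance) A := by
    refine MeasurableSet.inter (badU_meas S ρ l) ?_
    exact ((J_measurable ρ).comp (@measurable_snd Ω (C × C) S.Fplus _)) measurableSet_Iic
  have hsub : {ω | J ρ (two S s ω z) ≤ ε ∧ ∃ t ∈ S.T, l < J ρ (two S (s + t) ω z)}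
      ⊆ {ω | (S.θ s ω, two S s ω z) ∈ A} := by
    rintro ω ⟨h1, t, ht, h2⟩
    rw [two_add S hs ht] at h2
    exact ⟨mem_badU S ρ hat hl ht h2, h1⟩
  calc _ ≤ S.P {ω | (S.θ s ω, two S s ω z) ∈ A} := measure_mono hsub
    _ = ∫⁻ ω, S.P {ω' | (ω', two S s ω z) ∈ A} ∂S.P := markov_set S hs z hA
    _ ≤ ∫⁻ _, ENNReal.ofReal (ε / l) ∂S.P := by
        refine lintegral_mono fun ω => ?_
        by_cases hJ : J ρ (two S s ω z) ≤ ε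
        · refine (measure_mono (t := badU S ρ l (two S s ω z)) fun ω' h => h.1).trans ?_
          refine (badU_le S ρ hstat hl _).trans (ENNReal.ofReal_le_ofReal ?_)
          gcongr
        · have : {ω' | (ω', two S s ω z) ∈ A} = ∅ := by
            ext ω'
            simp only [Set.mem_ofPred_eq, Set.mem_empty_iff_false, iff_false]
            exact fun h => hJ h.2
          rw [this]; simp
    _ = _ := by simp

end SyncAux


namespace SyncAux

variable {Ω : Type} [mΩ : MeasurableSpace Ω] (S : RDS Ω)

theorem contr_time (h : S.Contractible) {z : C × C} (hz : z.1 ≠ z.2) :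
    ∃ t ∈ S.T, 0 < S.P {ω | dist (two S t ω z).1 (two S t ω z).2 < dist z.1 z.2} := by
  by_contra hc
  push Not at hc
  have hpos := h z.1 z.2 hz
  have hsub : {ω | ∃ t ∈ S.T, dist (S.φ t ω z.1) (S.φ t ω z.2) < dist z.1 z.2}
      ⊆ ⋃ m : ℕ, ⋃ k : ℕ, {ω | dist (two S (k * step S m) ω z).1 (two S (k * step S m) ω z).2
        < dist z.1 z.2} := by
    rintro ω ⟨t, ht, hd⟩
    have ho : IsOpen {w : C × C | dist w.1 w.2 < dist z.1 z.2} :=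
      isOpen_lt (by fun_prop) continuous_const
    obtain ⟨m, k, hk⟩ := step_approx S ht ω z (ho.mem_nhds hd)
    exact mem_iUnion.2 ⟨m, mem_iUnion.2 ⟨k, hk⟩⟩
  have h0 : S.P (⋃ m : ℕ, ⋃ k : ℕ, {ω | dist (two S (k * step S m) ω z).1
      (two S (k * step S m) ω z).2 < dist z.1 z.2}) = 0 := by
    rw [measure_iUnion_null_iff]
    intro m
    rw [measure_iUnion_null_iff]
    intro k
    exact le_antisymm (hc _ (T_mul S k (step_mem S m))) bot_le
  exact absurd (measure_mono_null hsub h0) hpos.ne'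

theorem exists_drop (h : S.Contractible) (ρ : Measure C) [IsProbabilityMeasure ρ]
    (hat : Atomless ρ) (hfull : FullSupport ρ) (hstat : S.ReverseStationary ρ)
    {z : C × C} (hz : z.1 ≠ z.2) : ∃ n : ℕ, PPhi S ρ n z < Phi ρ z := by
  have := S.P_prob
  by_contra hc
  push Not at hc
  let K : Set (C × C) := {w | Phi ρ w = Phi ρ z} ∩ ⋂ n : ℕ, {w | PPhi S ρ n w = Phi ρ w}
  have hΦ := Phi_continuous ρ hat
  have hKc : IsCompact K := by
    apply IsClosed.isCompact
    refine (isClosed_eq hΦ continuous_const).inter (isClosed_iInter fun n => ?_)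
    exact isClosed_eq (PPhi_cont S ρ hat (T_nat S n)) hΦ
  have hzK : z ∈ K := ⟨rfl, mem_iInter.2 fun n =>
    le_antisymm (drop_nonneg S ρ hat hstat (T_nat S n) z) (hc n)⟩
  obtain ⟨w, hwK, hmin⟩ := hKc.exists_isMinOn ⟨z, hzK⟩
    (f := fun w : C × C => dist w.1 w.2) (by fun_prop)
  have hwn : ∀ n : ℕ, PPhi S ρ n w = Phi ρ w := fun n => mem_iInter.1 hwK.2 n
  have hwne : w.1 ≠ w.2 := by
    intro e
    have h1 := Phi_diag ρ e
    have h2 : Phi ρ w = Phi ρ z := hwK.1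
    linarith [Phi_pos ρ hfull hz]
  have hwt : ∀ t ∈ S.T, PPhi S ρ t w = Phi ρ w := by
    intro t ht
    refine le_antisymm (drop_nonneg S ρ hat hstat ht w) ?_
    obtain ⟨n, hn⟩ := exists_nat_ge t
    rw [← hwn n]
    exact PPhi_anti S ρ hat hstat ht (T_nat S n) hn w
  obtain ⟨t, ht, hpos⟩ := contr_time S h hwne
  have a1 : ∀ᵐ ω ∂S.P, Phi ρ (two S t ω w) = Phi ρ z := by
    have e := drop_eq S ρ hat hstat ht hwne
    rw [hwt t ht, sub_self] at e
    have hInteg : Integrable (fun ω => (J ρ (two S t ω w) - J ρ w) ^ 2) S.P := by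
      refine Integrable.of_bound ((((J_measurable ρ).comp
        (two_meas S ht w)).sub_const _).pow_const 2).aestronglyMeasurable 1 ?_
      refine Eventually.of_forall fun ω => ?_
      have n1 := J_nonneg ρ (two S t ω w)
      have n2 := J_nonneg ρ w
      have n3 := J_le_one ρ (two S t ω w)
      have n4 := J_le_one ρ w
      rw [Real.norm_eq_abs, abs_of_nonneg (sq_nonneg _)]
      nlinarith
    have h0 := (integral_eq_zero_iff_of_nonneg (fun ω => sq_nonneg _) hInteg).1 e.symm
    filter_upwards [h0] with ω hω
    have hJ : J ρ (two S t ω w) = J ρ w := by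
      have : (J ρ (two S t ω w) - J ρ w) ^ 2 = 0 := hω
      have := pow_eq_zero_iff (two_ne_zero) |>.1 this
      linarith
    have s1 := J_add_swap ρ hat hwne
    have s2 := J_add_swap ρ hat (two_ne S t ω hwne)
    have hwz : Phi ρ w = Phi ρ z := hwK.1
    rw [← hwz, Phi, Phi, hJ, show J ρ (two S t ω w).swap = J ρ w.swap by linarith]
  have a2 : ∀ᵐ ω ∂S.P, ∀ n : ℕ, PPhi S ρ n (two S t ω w) = Phi ρ (two S t ω w) := by
    rw [ae_all_iff]
    intro n
    have e : ∫ ω, (Phi ρ (two S t ω w) - PPhi S ρ n (two S t ω w)) ∂S.P = 0 := by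
      rw [integral_sub (Phi_integrable S ρ ht w) (PPhi_integrable S ρ hat ht (T_nat S n) w),
        ← PPhi_add S ρ hat ht (T_nat S n), hwt _ (T_add S ht (T_nat S n)), ← hwt t ht]
      simp [PPhi]
    have h0 := (integral_eq_zero_iff_of_nonneg
      (fun ω => sub_nonneg.2 (drop_nonneg S ρ hat hstat (T_nat S n) _))
      ((Phi_integrable S ρ ht w).sub (PPhi_integrable S ρ hat ht (T_nat S n) w))).1 e
    filter_upwards [h0] with ω hω
    have : Phi ρ (two S t ω w) - PPhi S ρ n (two S t ω w) = 0 := hω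
    linarith
  have hnull : S.P {ω | dist (two S t ω w).1 (two S t ω w).2 < dist w.1 w.2} = 0 := by
    have : ∀ᵐ ω ∂S.P, ¬ dist (two S t ω w).1 (two S t ω w).2 < dist w.1 w.2 := by
      filter_upwards [a1, a2] with ω h1 h2
      have hm : two S t ω w ∈ K := ⟨h1, mem_iInter.2 h2⟩
      exact not_lt.2 (hmin hm)
    rw [ae_iff] at this
    simpa using this
  exact hpos.ne' hnull

theorem uniform_drop (h : S.Contractible) (ρ : Measure C) [IsProbabilityMeasure ρ]
    (hat : Atomless ρ) (hfull : FullSupport ρ) (hstat : S.ReverseStationary ρ)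
    {ε : ℝ} (hε : 0 < ε) : ∃ N : ℕ, ∃ δ > 0, ∀ z, ε ≤ Phi ρ z → PPhi S ρ N z + δ ≤ Phi ρ z := by
  have hΦ := Phi_continuous ρ hat
  have hD : IsCompact {z | ε ≤ Phi ρ z} := (isClosed_le continuous_const hΦ).isCompact
  have hU : ∀ n : ℕ, IsOpen {z | PPhi S ρ n z < Phi ρ z} := fun n =>
    isOpen_lt (PPhi_cont S ρ hat (T_nat S n)) hΦ
  obtain ⟨N, hN⟩ := hD.elim_directed_cover _ hU
    (by
      intro z hz
      have hne : z.1 ≠ z.2 := by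
        intro e
        have h1 : ε ≤ Phi ρ z := hz
        rw [Phi_diag ρ e] at h1
        linarith
      exact mem_iUnion.2 (exists_drop S h ρ hat hfull hstat hne))
    (Monotone.directed_le (by
      intro a b hab z hz
      exact lt_of_le_of_lt (PPhi_anti S ρ hat hstat (T_nat S a) (T_nat S b)
        (by exact_mod_cast hab) z) hz))
  refine ⟨N, ?_⟩
  by_cases hne : {z | ε ≤ Phi ρ z}.Nonempty
  · obtain ⟨w, hw, hmin⟩ := hD.exists_isMinOn hne (f := fun z => Phi ρ z - PPhi S ρ N z)
      (hΦ.sub (PPhi_cont S ρ hat (T_nat S N))).continuousOn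
    refine ⟨Phi ρ w - PPhi S ρ N w, sub_pos.2 (hN hw), fun z hz => ?_⟩
    have : Phi ρ w - PPhi S ρ N w ≤ Phi ρ z - PPhi S ρ N z := hmin hz
    linarith
  · exact ⟨1, one_pos, fun z hz => (hne ⟨z, hz⟩).elim⟩

theorem prob_small (h : S.Contractible) (ρ : Measure C) [IsProbabilityMeasure ρ]
    (hat : Atomless ρ) (hfull : FullSupport ρ) (hstat : S.ReverseStationary ρ)
    {ε η : ℝ} (hε : 0 < ε) (hη : 0 < η) (z : C × C) :
    ∃ s ∈ S.T, S.P {ω | ε ≤ Phi ρ (two S s ω z)} ≤ ENNReal.ofReal η := by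
  have := S.P_prob
  obtain ⟨N, δ, hδ, hdrop⟩ := uniform_drop S h ρ hat hfull hstat hε
  by_contra hc
  push Not at hc
  have hT : ∀ k : ℕ, (k : ℝ) * N ∈ S.T := fun k => T_mul S k (T_nat S N)
  have hstep : ∀ k : ℕ, PPhi S ρ (k * N) z ≤ 1 - k * (δ * η) := by
    intro k
    induction k with
    | zero => simpa using PPhi_le_one S ρ (T_zero S) z
    | succ k ih =>
      have e : ((k + 1 : ℕ) : ℝ) * N = k * N + N := by push_cast; ring
      rw [e, PPhi_add S ρ hat (hT k) (T_nat S N)]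
      let B : Set Ω := {ω | ε ≤ Phi ρ (two S (k * N) ω z)}
      have hB : MeasurableSet B :=
        ((Phi_meas ρ).comp (two_meas S (hT k) z)) measurableSet_Ici
      have hBη : η ≤ S.P.real B := by
        have := (hc _ (hT k)).le
        rw [Measure.real]
        exact (ENNReal.ofReal_le_iff_le_toReal (measure_ne_top _ _)).1 this
      have iB : Integrable (B.indicator fun _ => δ) S.P := (integrable_const δ).indicator hB
      have hle : ∫ ω, PPhi S ρ N (two S (k * N) ω z) ∂S.P
          ≤ ∫ ω, (Phi ρ (two S (k * N) ω z) - B.indicator (fun _ => δ) ω) ∂S.P := by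
        refine integral_mono (PPhi_integrable S ρ hat (hT k) (T_nat S N) z)
          ((Phi_integrable S ρ (hT k) z).sub iB) fun ω => ?_
        by_cases hω : ω ∈ B
        · simp only [hω, Set.indicator_of_mem]
          linarith [hdrop _ hω]
        · simp only [hω, not_false_eq_true, Set.indicator_of_notMem, sub_zero]
          exact drop_nonneg S ρ hat hstat (T_nat S N) _
      rw [integral_sub (Phi_integrable S ρ (hT k) z) iB, integral_indicator_const _ hB] at hle
      have e2 : ∫ ω, Phi ρ (two S (k * N) ω z) ∂S.P = PPhi S ρ (k * N) z := rfl
      rw [e2, smul_eq_mul] at hle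
      push_cast
      nlinarith
  obtain ⟨k, hk⟩ := exists_nat_gt (1 / (δ * η))
  have h1 := hstep k
  have h2 := PPhi_nonneg S ρ (k * N) z
  rw [div_lt_iff₀ (by positivity)] at hk
  linarith

theorem eq_zero_of_le {x : ℝ≥0∞} {c : ℝ} (h : ∀ ε : ℝ, 0 < ε → x ≤ ENNReal.ofReal (c * ε)) :
    x = 0 := by
  have ht : Tendsto (fun ε : ℝ => ENNReal.ofReal (c * ε)) (𝓝[>] 0) (𝓝 0) := by
    have h1 : Tendsto (fun ε : ℝ => c * ε) (𝓝 0) (𝓝 0) := by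
      simpa using (continuous_const_mul c).tendsto 0
    have := ENNReal.tendsto_ofReal h1
    rw [ENNReal.ofReal_zero] at this
    exact this.mono_left nhdsWithin_le_nhds
  refine le_antisymm (ge_of_tendsto ht ?_) bot_le
  filter_upwards [self_mem_nhdsWithin] with ε hε
  exact h ε hε

def Ev (ρ : Measure C) (l : ℝ) (z : C × C) (ω : Ω) : Prop :=
  ∃ s ∈ S.T, ∀ t ∈ S.T, J ρ (two S (s + t) ω z) ≤ l

theorem ae_alt (h : S.Contractible) (ρ : Measure C) [IsProbabilityMeasure ρ]
    (hat : Atomless ρ) (hfull : FullSupport ρ) (hstat : S.ReverseStationary ρ)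
    {l : ℝ} (hl : 0 < l) (z : C × C) : ∀ᵐ ω ∂S.P, Ev S ρ l z ω ∨ Ev S ρ l z.swap ω := by
  rw [ae_iff]
  refine eq_zero_of_le (c := 1 + 2 / l) fun ε hε => ?_
  obtain ⟨s, hs, hsP⟩ := prob_small S h ρ hat hfull hstat (mul_pos hε hε) hε z
  have m1 := max_ineq S ρ hat hstat (ε := ε) hl hs z
  have m2 := max_ineq S ρ hat hstat (ε := ε) hl hs z.swap
  have hsub : {ω | ¬ (Ev S ρ l z ω ∨ Ev S ρ l z.swap ω)} ⊆
      {ω | ε * ε ≤ Phi ρ (two S s ω z)} ∪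
      ({ω | J ρ (two S s ω z) ≤ ε ∧ ∃ t ∈ S.T, l < J ρ (two S (s + t) ω z)} ∪
      {ω | J ρ (two S s ω z.swap) ≤ ε ∧ ∃ t ∈ S.T, l < J ρ (two S (s + t) ω z.swap)}) := by
    intro ω hω
    have hω' : ¬ (Ev S ρ l z ω ∨ Ev S ρ l z.swap ω) := hω
    rw [not_or] at hω'
    obtain ⟨h1, h2⟩ := hω'
    unfold Ev at h1 h2
    push Not at h1 h2
    by_cases hP : ε * ε ≤ Phi ρ (two S s ω z)
    · exact Or.inl hP
    · right
      by_cases hJ : J ρ (two S s ω z) ≤ ε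
      · exact Or.inl ⟨hJ, h1 s hs⟩
      · refine Or.inr ⟨?_, h2 s hs⟩
        by_contra hJ2
        push Not at hP hJ hJ2
        rw [two_swap] at hJ2
        unfold Phi at hP
        nlinarith
  calc _ ≤ _ := measure_mono hsub
    _ ≤ ENNReal.ofReal ε + (ENNReal.ofReal (ε / l) + ENNReal.ofReal (ε / l)) :=
        (measure_union_le _ _).trans (add_le_add hsP
          ((measure_union_le _ _).trans (add_le_add m1 m2)))
    _ = _ := by
        rw [← ENNReal.ofReal_add (by positivity) (by positivity),
          ← ENNReal.ofReal_add (by positivity) (by positivity)]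
        congr 1
        ring

theorem Ev_mono (ρ : Measure C) {l l' : ℝ} (hl : l ≤ l') {z : C × C} {ω : Ω}
    (h : Ev S ρ l z ω) : Ev S ρ l' z ω := by
  obtain ⟨s, hs, h⟩ := h
  exact ⟨s, hs, fun t ht => (h t ht).trans hl⟩

theorem Ev_eventually (ρ : Measure C) {l : ℝ} {z : C × C} {ω : Ω}
    (h : Ev S ρ l z ω) : ∀ᶠ t in S.tFilter, J ρ (two S t ω z) ≤ l := by
  obtain ⟨s, hs, h⟩ := h
  unfold RDS.tFilter
  rw [eventually_inf_principal]
  filter_upwards [eventually_ge_atTop s] with t hst ht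
  have := h (t - s) (T_sub S hs ht hst)
  simpa using this

theorem ae_alt_all (h : S.Contractible) (ρ : Measure C) [IsProbabilityMeasure ρ]
    (hat : Atomless ρ) (hfull : FullSupport ρ) (hstat : S.ReverseStationary ρ)
    (z : C × C) : ∀ᵐ ω ∂S.P, (∀ l > 0, Ev S ρ l z ω) ∨ (∀ l > 0, Ev S ρ l z.swap ω) := by
  have : ∀ᵐ ω ∂S.P, ∀ n : ℕ, Ev S ρ (1 / ((n : ℝ) + 1)) z ω ∨ Ev S ρ (1 / ((n : ℝ) + 1)) z.swap ω := by
    rw [ae_all_iff]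
    exact fun n => ae_alt S h ρ hat hfull hstat (by positivity) z
  filter_upwards [this] with ω hω
  by_contra hc
  push Not at hc
  obtain ⟨⟨l1, hl1, h1⟩, l2, hl2, h2⟩ := hc
  obtain ⟨n, hn⟩ := exists_nat_one_div_lt (lt_min hl1 hl2)
  rcases hω n with h' | h'
  · exact h1 (Ev_mono S ρ (hn.le.trans (min_le_left _ _)) h')
  · exact h2 (Ev_mono S ρ (hn.le.trans (min_le_right _ _)) h')

theorem dist_tendsto (ρ : Measure C) [IsProbabilityMeasure ρ] (hfull : FullSupport ρ)
    {z : C × C} {ω : Ω} (h : ∀ l > 0, Ev S ρ l z ω) :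
    Tendsto (fun t => dist (S.φ t ω z.1) (S.φ t ω z.2)) S.tFilter (𝓝 0) := by
  rw [Metric.tendsto_nhds]
  intro ε hε
  obtain ⟨δ, hδ, hJ⟩ := J_small ρ hfull (half_pos hε)
  filter_upwards [Ev_eventually S ρ (h (δ / 2) (half_pos hδ))] with t ht
  have := (hJ _ (lt_of_le_of_lt ht (half_lt_self hδ))).2
  rw [Real.dist_eq, sub_zero, abs_of_nonneg dist_nonneg]
  exact lt_of_le_of_lt this (half_lt_self hε)

theorem vol_tendsto (ρ : Measure C) [IsProbabilityMeasure ρ] (hfull : FullSupport ρ)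
    {z : C × C} {ω : Ω} (h : ∀ l > 0, Ev S ρ l z ω) :
    Tendsto (fun t => volume (S.φ t ω '' arc z.1 z.2)) S.tFilter (𝓝 0) := by
  rw [ENNReal.tendsto_nhds_zero]
  intro ε hε
  obtain ⟨e, he, heε⟩ : ∃ e : ℝ, 0 < e ∧ ENNReal.ofReal e ≤ ε := by
    rcases eq_or_ne ε ⊤ with rfl | hne
    · exact ⟨1, one_pos, le_top⟩
    · exact ⟨ε.toReal, ENNReal.toReal_pos hε.ne' hne, ENNReal.ofReal_toReal_le⟩
  obtain ⟨δ, hδ, hJ⟩ := J_small ρ hfull he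
  have hT : ∀ᶠ t in S.tFilter, t ∈ S.T := by
    unfold RDS.tFilter
    exact mem_inf_of_right (mem_principal_self _)
  filter_upwards [Ev_eventually S ρ (h (δ / 2) (half_pos hδ)), hT] with t ht htT
  rw [image_arc (S.φ_orient t htT ω)]
  exact (hJ _ (lt_of_le_of_lt ht (half_lt_self hδ))).1.trans heε

theorem prob_one_of_ae {p : Ω → Prop} (h : ∀ᵐ ω ∂S.P, p ω) : S.P {ω | p ω} = 1 := by
  have := S.P_prob
  rw [measure_congr (t := univ) (eventuallyEq_univ.2 h)]
  exact measure_univ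

theorem sync (h : S.Contractible) (ρ : Measure C) [IsProbabilityMeasure ρ]
    (hat : Atomless ρ) (hfull : FullSupport ρ) (hstat : S.ReverseStationary ρ) :
    S.Synchronising := by
  intro x y
  apply prob_one_of_ae
  filter_upwards [ae_alt_all S h ρ hat hfull hstat (x, y)] with ω hω
  rcases hω with hω | hω
  · have h2 := dist_tendsto S ρ hfull (z := (x, y)) hω
    exact h2
  · have h2 := dist_tendsto S ρ hfull (z := (y, x)) hω
    have e : (fun t => dist (S.φ t ω x) (S.φ t ω y)) =
        fun t => dist (S.φ t ω y) (S.φ t ω x) := funext fun t => dist_comm _ _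
    rw [e]
    exact h2

theorem stable (h : S.Contractible) (ρ : Measure C) [IsProbabilityMeasure ρ]
    (hat : Atomless ρ) (hfull : FullSupport ρ) (hstat : S.ReverseStationary ρ) :
    S.EverywhereLocallyStable := by
  intro x
  apply prob_one_of_ae
  rw [ae_iff]
  refine eq_zero_of_le (c := 2) fun ε hε => ?_
  obtain ⟨V, hV, hxV, hVε⟩ := exists_small_nhd ρ hat x hε
  obtain ⟨x', y', hSB, harc⟩ := arc_nhds x hV hxV
  have hJ : J ρ (x', y') ≤ ε := (measureReal_mono harc).trans hVε.le
  have hne : (x', y').1 ≠ (x', y').2 := (SB_ne hSB).1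
  have hmax := badU_le S ρ hstat (l := 1 / 2) (by norm_num) (x', y')
  have hae : ∀ᵐ ω ∂S.P, (¬ ∃ U : Set UnitAddCircle, IsOpen U ∧ x ∈ U ∧
      Tendsto (fun t => volume (⇑(S.φ t ω) '' U)) S.tFilter (𝓝 0)) →
      ω ∈ badU S ρ (1 / 2) (x', y') := by
    filter_upwards [ae_alt_all S h ρ hat hfull hstat (x', y')] with ω hω hnot
    rcases hω with hω | hω
    · have hv := vol_tendsto S ρ hfull (z := (x', y')) hω
      exact (hnot ⟨arc x' y', isOpen_arc _ _, hSB, hv⟩).elim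
    · obtain ⟨s, hs, hs2⟩ := hω (1 / 4) (by norm_num)
      have h1 := hs2 0 (T_zero S)
      rw [add_zero, two_swap] at h1
      have h2 := J_add_swap ρ hat (two_ne S s ω hne)
      exact mem_badU S ρ hat (by norm_num) hs (by linarith)
  refine (measure_mono_ae hae).trans (hmax.trans (ENNReal.ofReal_le_ofReal ?_))
  rw [div_le_iff₀ (by norm_num)]
  linarith

end SyncAux

/-- if `φ` is contractible and admits an atomless reverse-stationary probability
measure of full support, then `φ` is stably synchronising. -/
theorem contractible_atomless_fullSupport_reverseStationary_stablySynchronising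
    {Ω : Type} [MeasurableSpace Ω] (S : RDS Ω) (h : S.Contractible)
    (ρ : Measure UnitAddCircle) [IsProbabilityMeasure ρ]
    (hatomless : Atomless ρ) (hfull : FullSupport ρ) (hstat : S.ReverseStationary ρ) :
    S.StablySynchronising := by
  exact ⟨SyncAux.sync S h ρ hatomless hfull hstat, SyncAux.stable S h ρ hatomless hfull hstat⟩
end
end

section
/- If the invertible RDS φ on 𝕊¹ has reverse-minimal dynamics, then every reverse-stationary probability measure of φ is atomless and has full support. -/
open MeasureTheory Filter Topology Set ENNReal

noncomputable section

namespace RDS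

/-- Measurability of `ω ↦ ρ (φ(t,ω) K)` for closed `K`. -/
theorem aux_meas {Ω : Type} [m : MeasurableSpace Ω] (S : RDS Ω) (ρ : Measure UnitAddCircle)
    [IsProbabilityMeasure ρ] {t : ℝ} (ht : t ∈ S.T) {K : Set UnitAddCircle} (hK : IsClosed K) :
    Measurable (fun ω => ρ (⇑(S.φ t ω) '' K)) := by
  obtain ⟨D, hDK, hDc, hKD⟩ :=
    (TopologicalSpace.IsSeparable.of_separableSpace K).exists_countable_dense_subset
  have hφ : Measurable (fun p : Ω × UnitAddCircle => S.φ t p.1 p.2) := by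
    refine (S.φ_meas t ht).mono ?_ le_rfl
    exact sup_le_sup (MeasurableSpace.comap_mono (S.F_le t ht)) le_rfl
  have hs : MeasurableSet (⋂ n : ℕ, ⋃ y ∈ D,
      {p : Ω × UnitAddCircle | dist (S.φ t p.1 y) p.2 < 1 / ((n : ℝ) + 1)}) := by
    refine MeasurableSet.iInter fun n => MeasurableSet.biUnion hDc fun y _ => ?_
    have h1 : Measurable (fun p : Ω × UnitAddCircle => S.φ t p.1 y) :=
      hφ.comp (measurable_fst.prodMk measurable_const)
    exact measurableSet_lt (h1.dist measurable_snd) measurable_const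
  convert measurable_measure_prodMk_left (ν := ρ) hs using 2 with ω
  congr 1
  have hcl : ⇑(S.φ t ω) '' K = closure (⇑(S.φ t ω) '' D) := by
    apply Subset.antisymm
    · exact (image_mono hKD).trans (image_closure_subset_closure_image (S.φ t ω).continuous)
    · exact closure_minimal (image_mono hDK) ((S.φ t ω).isClosedMap K hK)
  ext x
  rw [hcl, Metric.mem_closure_iff]
  simp only [mem_preimage, mem_iInter, mem_iUnion, mem_ofPred_eq, exists_prop, exists_mem_image]
  constructor
  · intro h n
    obtain ⟨y, hy, hd⟩ := h (1 / ((n : ℝ) + 1)) (by positivity)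
    exact ⟨y, hy, by rwa [dist_comm]⟩
  · intro h ε hε
    obtain ⟨n, hn⟩ := exists_nat_one_div_lt hε
    obtain ⟨y, hy, hd⟩ := h n
    exact ⟨y, hy, by rw [dist_comm]; exact hd.trans hn⟩

/-- A countable set of times which is dense from the right in the time set. -/
theorem aux_times {Ω : Type} [m : MeasurableSpace Ω] (S : RDS Ω) :
    ∃ Q : Set ℝ, Q.Countable ∧ Q ⊆ S.T ∧ ∀ t ∈ S.T, ∃ u : ℕ → ℝ, (∀ n, u n ∈ Q) ∧
      Antitone u ∧ Tendsto u atTop (𝓝 t) := by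
  rcases S.T_cases with hT | hT
  · refine ⟨S.T, ?_, Subset.rfl, fun t ht => ⟨fun _ => t, fun _ => ht, antitone_const,
      tendsto_const_nhds⟩⟩
    rw [hT]
    exact countable_range _
  · refine ⟨Set.range (fun q : ℚ => (q : ℝ)) ∩ S.T, (countable_range _).mono inter_subset_left,
      inter_subset_right, fun t ht => ?_⟩
    obtain ⟨u, hu, hlt, hlim⟩ := Real.exists_seq_rat_strictAnti_tendsto t
    refine ⟨fun n => (u n : ℝ), fun n => ⟨⟨u n, rfl⟩, ?_⟩, ?_, hlim⟩
    · rw [hT] at ht ⊢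
      exact le_trans (mem_Ici.1 ht) (hlt n).le
    · intro a b hab
      exact Rat.cast_le.2 (hu.antitone hab)

/-- Invariance at each fixed time almost surely gives almost sure invariance at all times. -/
theorem aux_inv {Ω : Type} [m : MeasurableSpace Ω] (S : RDS Ω) {K : Set UnitAddCircle}
    (hK : IsClosed K) (h : ∀ t ∈ S.T, ∀ᵐ ω ∂S.P, ⇑(S.φ t ω) '' Kᶜ ⊆ Kᶜ) :
    S.ForwardInvariant Kᶜ := by
  obtain ⟨Q, hQc, hQT, hQ⟩ := S.aux_times
  have hall : ∀ᵐ ω ∂S.P, ∀ t ∈ Q, ⇑(S.φ t ω) '' Kᶜ ⊆ Kᶜ :=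
    (ae_ball_iff hQc).2 fun t ht => h t (hQT ht)
  filter_upwards [hall] with ω hω t ht
  rintro _ ⟨y, hy, rfl⟩ hyK
  obtain ⟨u, huQ, hua, hul⟩ := hQ t ht
  have hz : ∀ n, (S.φ (u n) ω).symm (S.φ t ω y) ∈ K := by
    intro n
    by_contra hn
    refine hω (u n) (huQ n) ⟨_, hn, rfl⟩ ?_
    rwa [Homeomorph.apply_symm_apply]
  obtain ⟨z, hzK, g, hg, hlim⟩ := hK.isCompact.tendsto_subseq hz
  have h2 := S.φ_cadlag_right ω t ht (u ∘ g) (fun n => hQT (huQ _))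
    (hua.comp_monotone hg.monotone) (hul.comp hg.tendsto_atTop) _ z hlim
  simp only [Function.comp_apply, Homeomorph.apply_symm_apply] at h2
  have h3 := tendsto_nhds_unique tendsto_const_nhds h2
  have h4 : y = z := (S.φ t ω).injective h3
  exact hy (h4 ▸ hzK)

/-- Full support. -/
theorem aux_full {Ω : Type} [m : MeasurableSpace Ω] (S : RDS Ω) (h : S.ReverseMinimal)
    (ρ : Measure UnitAddCircle) [IsProbabilityMeasure ρ] (hρ : S.ReverseStationary ρ) :
    FullSupport ρ := by
  have hPp := S.P_prob
  have hKc : IsClosed ρ.support := Measure.isClosed_support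
  have h0 : ρ ρ.supportᶜ = 0 := Measure.measure_compl_support
  have hinv : S.ForwardInvariant ρ.supportᶜ := by
    refine S.aux_inv hKc fun t ht => ?_
    have hst := hρ t ht _ hKc.isOpen_compl.measurableSet
    rw [h0] at hst
    have hm : Measurable (fun ω => ρ (⇑(S.φ t ω) '' ρ.supportᶜ)) := by
      have : (fun ω => ρ (⇑(S.φ t ω) '' ρ.supportᶜ)) =
          fun ω => 1 - ρ (⇑(S.φ t ω) '' ρ.support) := by
        funext ω
        rw [image_compl_eq (S.φ t ω).bijective,
          prob_compl_eq_one_sub ((S.φ t ω).isClosedMap _ hKc).measurableSet]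
      rw [this]
      exact measurable_const.sub (S.aux_meas ρ ht hKc)
    have hae := (lintegral_eq_zero_iff hm).1 hst.symm
    filter_upwards [hae] with ω hω
    exact Measure.subset_compl_support_of_isOpen
      ((S.φ t ω).isOpenMap _ hKc.isOpen_compl) hω
  rcases h _ hKc.isOpen_compl hinv with h1 | h1
  · intro U hU hne
    rw [pos_iff_ne_zero]
    intro hU0
    have := Measure.subset_compl_support_of_isOpen hU hU0
    rw [h1] at this
    exact hne.ne_empty (subset_empty_iff.1 this)
  · rw [h1, measure_univ] at h0
    exact absurd h0 one_ne_zero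

/-- Atomlessness. -/
theorem aux_atomless {Ω : Type} [m : MeasurableSpace Ω] (S : RDS Ω) (h : S.ReverseMinimal)
    (ρ : Measure UnitAddCircle) [IsProbabilityMeasure ρ] (hρ : S.ReverseStationary ρ) :
    Atomless ρ := by
  have hPp := S.P_prob
  have hfin : ∀ ε : ℝ≥0∞, 0 < ε → {x : UnitAddCircle | ε ≤ ρ {x}}.Finite := by
    intro ε hε
    refine Measure.finite_const_le_meas_of_disjoint_iUnion ρ hε
      (As := fun x : UnitAddCircle => {x}) (fun x => measurableSet_singleton x) ?_
      (measure_ne_top _ _)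
    intro x y hxy
    exact disjoint_singleton.2 hxy
  intro x0
  by_contra hx0
  obtain ⟨x1, hx1, hmax⟩ := Set.exists_max_image _ (fun x => ρ {x})
    (hfin (ρ {x0}) (pos_iff_ne_zero.2 hx0)) ⟨x0, le_refl (ρ {x0})⟩
  have hpos : 0 < ρ {x1} := lt_of_lt_of_le (pos_iff_ne_zero.2 hx0) hx1
  have hle : ∀ x, ρ {x} ≤ ρ {x1} := by
    intro x
    by_cases hx : ρ {x0} ≤ ρ {x}
    · exact hmax x hx
    · exact (not_le.1 hx).le.trans hx1
  have hMf := hfin _ hpos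
  set M : Set UnitAddCircle := {x | ρ {x1} ≤ ρ {x}} with hM
  have hinv : S.ForwardInvariant Mᶜ := by
    refine S.aux_inv hMf.isClosed fun t ht => ?_
    have key : ∀ᵐ ω ∂S.P, ∀ x ∈ M, S.φ t ω x ∈ M := by
      refine (ae_ball_iff hMf.countable).2 fun x hx => ?_
      have hst := hρ t ht {x} (measurableSet_singleton x)
      have hm := S.aux_meas ρ ht (isClosed_singleton (x := x))
      have hae := ae_eq_of_ae_le_of_lintegral_le (μ := S.P)
        (f := fun ω => ρ (⇑(S.φ t ω) '' {x})) (g := fun _ => ρ {x1})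
        (Eventually.of_forall fun ω => by
          simp only [image_singleton]; exact hle _)
        (by rw [← hst]; exact measure_ne_top _ _) aemeasurable_const
        (by rw [← hst, lintegral_const, measure_univ, mul_one]; exact hx)
      filter_upwards [hae] with ω hω
      simp only [image_singleton] at hω
      exact hω.ge
    filter_upwards [key] with ω hω
    have hsub : ⇑(S.φ t ω) '' M ⊆ M := image_subset_iff.2 hω
    have heq : ⇑(S.φ t ω) '' M = M :=
      Set.eq_of_subset_of_ncard_le hsub
        (ncard_image_of_injective M (S.φ t ω).injective).ge hMf
    rw [image_compl_eq (S.φ t ω).bijective, heq]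
  rcases h _ hMf.isClosed.isOpen_compl hinv with h1 | h1
  · rw [compl_empty_iff] at h1
    rw [h1] at hMf
    have : Infinite (Ico (0 : ℝ) (0 + 1)) := (Ico_infinite (by norm_num)).to_subtype
    have : Infinite UnitAddCircle :=
      Infinite.of_injective _ (AddCircle.equivIco (1 : ℝ) 0).symm.injective
    exact infinite_univ hMf
  · rw [compl_univ_iff] at h1
    have : x1 ∈ M := le_refl (ρ {x1})
    rw [h1] at this
    exact this

end RDS

/-- if `φ` has reverse-minimal dynamics then every reverse-stationary probability
measure is atomless and has full support. -/
theorem reverseMinimal_reverseStationary_atomless_fullSupport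
    {Ω : Type} [MeasurableSpace Ω] (S : RDS Ω) (h : S.ReverseMinimal) :
    ∀ ρ : Measure UnitAddCircle, IsProbabilityMeasure ρ → S.ReverseStationary ρ →
      Atomless ρ ∧ FullSupport ρ := by
  intro ρ hp hρ
  exact ⟨S.aux_atomless h ρ hρ, S.aux_full h ρ hρ⟩
end
end

section
/- For an invertible RDS φ on 𝕊¹: the set Ω_c of contractive sample points is 𝓕₊-measurable; the crack-point map r̃:Ω_c→𝕊¹ is measurable with respect to the σ-algebra of 𝓕₊-measurable subsets of Ω_c; and for each t∈𝕋⁺ one has (θ^t)⁻¹(Ω_c)=Ω_c and r̃(θ^tω)=φ(t,ω)r̃(ω) for all ω∈Ω_c. -/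
open MeasureTheory Filter Topology Set ENNReal

noncomputable section

namespace RDS

lemma meas_vol {Ω : Type} [MeasurableSpace Ω] (f : Ω → UnitAddCircle ≃ₜ UnitAddCircle)
    (hf : Measurable (fun p : Ω × UnitAddCircle => f p.1 p.2))
    (G : Set UnitAddCircle) (hG : IsClosed G) :
    Measurable (fun ω => volume (⇑(f ω) '' G)) := by
  obtain ⟨c, hcG, hc, hGc⟩ := (TopologicalSpace.IsSeparable.of_separableSpace G).exists_countable_dense_subset
  have key : ∀ ω y, y ∈ ⇑(f ω) '' G ↔ ∀ n : ℕ, ∃ x ∈ c, dist (f ω x) y < 1 / ((n : ℝ) + 1) := by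
    intro ω y
    constructor
    · rintro ⟨x, hx, rfl⟩ n
      have h1 : x ∈ closure c := hGc hx
      have hop : IsOpen {z | dist (f ω z) (f ω x) < 1 / ((n : ℝ) + 1)} :=
        isOpen_lt (by fun_prop) continuous_const
      have hx' : x ∈ {z | dist (f ω z) (f ω x) < 1 / ((n : ℝ) + 1)} := by
        simp only [mem_ofPred_eq, dist_self]; positivity
      obtain ⟨z, hz1, hz2⟩ := mem_closure_iff.1 h1 _ hop hx'
      exact ⟨z, hz2, hz1⟩
    · intro h
      have hcl : IsClosed (⇑(f ω) '' G) := (f ω).isClosedMap G hG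
      rw [← hcl.closure_eq, Metric.mem_closure_iff]
      intro ε hε
      obtain ⟨n, hn⟩ := exists_nat_one_div_lt hε
      obtain ⟨x, hx, hxy⟩ := h n
      exact ⟨f ω x, ⟨x, hcG hx, rfl⟩, by rw [dist_comm]; exact hxy.trans hn⟩
  have hm : MeasurableSet {p : Ω × UnitAddCircle | p.2 ∈ ⇑(f p.1) '' G} := by
    have : {p : Ω × UnitAddCircle | p.2 ∈ ⇑(f p.1) '' G}
        = ⋂ n : ℕ, ⋃ x ∈ c, {p | dist (f p.1 x) p.2 < 1 / ((n : ℝ) + 1)} := by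
      ext p
      simp only [mem_ofPred_eq, mem_iInter, mem_iUnion, key, exists_prop]
    rw [this]
    refine MeasurableSet.iInter fun n => MeasurableSet.biUnion hc fun x _ => ?_
    have h1 : Measurable (fun p : Ω × UnitAddCircle => f p.1 x) :=
      hf.comp (measurable_fst.prodMk measurable_const)
    exact measurableSet_lt (h1.dist measurable_snd) measurable_const
  have h2 := measurable_measure_prodMk_left (ν := (volume : Measure UnitAddCircle)) hm
  have h3 : ∀ ω, Prod.mk ω ⁻¹' {p : Ω × UnitAddCircle | p.2 ∈ ⇑(f p.1) '' G} = ⇑(f ω) '' G := by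
    intro ω
    ext y
    simp only [mem_preimage, mem_ofPred_eq]
  simp only [h3] at h2
  exact h2

variable {Ω : Type} [m : MeasurableSpace Ω] (S : RDS Ω)

lemma tendsto_iff (f : ℝ → ℝ≥0∞) :
    Tendsto f S.tFilter (𝓝 0) ↔ ∀ ε > 0, ∃ N : ℝ, ∀ t ∈ S.T, N ≤ t → f t ≤ ε := by
  rw [ENNReal.tendsto_nhds_zero]
  refine forall₂_congr fun ε hε => ?_
  rw [tFilter, eventually_inf_principal, eventually_atTop]
  exact exists_congr fun N => ⟨fun h t ht hN => h t hN ht, fun h t hN ht => h t ht hN⟩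

lemma nat_mem (n : ℕ) : (n : ℝ) ∈ S.T := by
  rcases S.T_cases with h | h <;> rw [h]
  · exact ⟨n, rfl⟩
  · exact mem_Ici.2 (Nat.cast_nonneg n)

lemma add_mem {s t : ℝ} (hs : s ∈ S.T) (ht : t ∈ S.T) : s + t ∈ S.T := by
  have hT := S.T_cases
  generalize S.T = T at *
  rcases hT with rfl | rfl
  · obtain ⟨a, rfl⟩ := hs
    obtain ⟨b, rfl⟩ := ht
    exact ⟨a + b, by push_cast; rfl⟩
  · exact add_nonneg (mem_Ici.1 hs) (mem_Ici.1 ht)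

lemma sub_mem {s t : ℝ} (hs : s ∈ S.T) (ht : t ∈ S.T) (hst : s ≤ t) : t - s ∈ S.T := by
  have hT := S.T_cases
  generalize S.T = T at *
  rcases hT with rfl | rfl
  · obtain ⟨a, rfl⟩ := hs
    obtain ⟨b, rfl⟩ := ht
    have hst' : a ≤ b := by simpa using hst
    exact ⟨b - a, by simp [Nat.cast_sub hst']⟩
  · exact sub_nonneg.2 hst

lemma exists_seq {t : ℝ} (ht : t ∈ S.T) : ∃ u : ℕ → ℚ, (∀ n, (u n : ℝ) ∈ S.T) ∧
    (∀ n, t ≤ u n) ∧ Antitone (fun n => (u n : ℝ)) ∧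
    Tendsto (fun n => (u n : ℝ)) atTop (𝓝 t) := by
  have hT := S.T_cases
  generalize S.T = T at *
  rcases hT with rfl | rfl
  · obtain ⟨a, rfl⟩ := ht
    exact ⟨fun _ => (a : ℚ), fun n => ⟨a, by simp⟩, fun n => by simp, fun _ _ _ => by simp,
      by simp⟩
  · have ht0 : 0 ≤ t := ht
    obtain ⟨u, hu1, hu2, hu3⟩ :=
      Rat.isDenseEmbedding_coe_real.dense.exists_seq_strictAnti_tendsto Rat.cast_mono t
    exact ⟨u, fun n => mem_Ici.2 (ht0.trans (mem_Ioi.1 (hu2 n)).le), fun n => (mem_Ioi.1 (hu2 n)).le,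
      fun i j hij => Rat.cast_mono (hu1.antitone hij), hu3⟩

/-- Contraction of `G` along rational times. -/
def DQ (ω : Ω) (G : Set UnitAddCircle) : Prop :=
  ∀ j : ℕ, ∃ N : ℕ, ∀ q : ℚ, (q : ℝ) ∈ S.T → (N : ℝ) ≤ q →
    volume (⇑(S.φ q ω) '' G) ≤ ((j : ℝ≥0∞) + 1)⁻¹

lemma DQ_of_tendsto {ω : Ω} {G : Set UnitAddCircle}
    (h : Tendsto (fun t => volume (⇑(S.φ t ω) '' G)) S.tFilter (𝓝 0)) : S.DQ ω G := by
  rw [tendsto_iff] at h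
  intro j
  obtain ⟨N, hN⟩ := h ((j : ℝ≥0∞) + 1)⁻¹ (ENNReal.inv_pos.2 (by finiteness))
  obtain ⟨M, hM⟩ := exists_nat_ge N
  exact ⟨M, fun q hq hMq => hN q hq (hM.trans hMq)⟩

lemma DQ_measurable (G : Set UnitAddCircle) (hG : IsClosed G) :
    MeasurableSet[S.Fplus] {ω | S.DQ ω G} := by
  have : {ω | S.DQ ω G} = ⋂ j : ℕ, ⋃ N : ℕ, ⋂ q : ℚ, {ω | (q : ℝ) ∈ S.T → (N : ℝ) ≤ q →
    volume (⇑(S.φ q ω) '' G) ≤ ((j : ℝ≥0∞) + 1)⁻¹} := by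
    ext ω; simp [DQ]
  rw [this]
  refine @MeasurableSet.iInter _ _ S.Fplus _ _ fun j => @MeasurableSet.iUnion _ _ S.Fplus _ _
    fun N => @MeasurableSet.iInter _ _ S.Fplus _ _ fun q => ?_
  by_cases hq : (q : ℝ) ∈ S.T
  · by_cases hN : (N : ℝ) ≤ q
    · simp only [hq, hN, true_imp_iff]
      have hle : S.F q ≤ S.Fplus := le_iSup₂_of_le (q : ℝ) hq le_rfl
      apply hle
      exact (@meas_vol Ω (S.F q) (S.φ q) (S.φ_meas q hq) G hG) measurableSet_Iic
    · simp [hN]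
  · simp [hq]

lemma vol_le {ω : Ω} {K K' : Set UnitAddCircle} (hK : IsClosed K) (hKK : K ⊆ interior K')
    {t : ℝ} (ht : t ∈ S.T) (u : ℕ → ℝ) (hu : ∀ n, u n ∈ S.T) (ha : Antitone u)
    (hl : Tendsto u atTop (𝓝 t)) :
    ∃ n, volume (⇑(S.φ t ω) '' K) ≤ volume (⇑(S.φ (u n) ω) '' K') := by
  by_contra! hcon
  have hex : ∀ n, ∃ p : UnitAddCircle × UnitAddCircle,
      p.1 ∈ K ∧ p.2 ∉ K' ∧ S.φ t ω p.1 = S.φ (u n) ω p.2 := by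
    intro n
    have : ¬ (⇑(S.φ t ω) '' K ⊆ ⇑(S.φ (u n) ω) '' K') := fun h =>
      absurd (measure_mono h) (not_le.2 (hcon n))
    obtain ⟨_, ⟨x, hx, rfl⟩, hy⟩ := not_subset.1 this
    refine ⟨(x, (S.φ (u n) ω).symm (S.φ t ω x)), hx, fun h => hy ⟨_, h, by simp⟩, by simp⟩
  choose p hp1 hp2 hp3 using hex
  obtain ⟨a, g, hg, hlim⟩ := CompactSpace.tendsto_subseq p
  have h1 : Tendsto (fun n => (p (g n)).1) atTop (𝓝 a.1) := (continuous_fst.tendsto a).comp hlim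
  have h2 : Tendsto (fun n => (p (g n)).2) atTop (𝓝 a.2) := (continuous_snd.tendsto a).comp hlim
  have ha1 : a.1 ∈ K := hK.mem_of_tendsto h1 (Eventually.of_forall fun n => hp1 _)
  have ha2 : a.2 ∉ interior K' := fun h => by
    obtain ⟨n, hn⟩ := (h2.eventually (isOpen_interior.mem_nhds h)).exists
    exact hp2 _ (interior_subset hn)
  have h3 := S.φ_cadlag_right ω t ht (u ∘ g) (fun n => hu _)
    (fun i j hij => ha (hg.monotone hij)) (hl.comp hg.tendsto_atTop) _ _ h2
  have h4 : Tendsto (fun n => S.φ t ω (p (g n)).1) atTop (𝓝 (S.φ t ω a.1)) :=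
    ((S.φ t ω).continuous.tendsto _).comp h1
  have h5 : S.φ t ω a.1 = S.φ t ω a.2 := by
    refine tendsto_nhds_unique h4 (h3.congr fun n => ?_)
    exact (hp3 (g n)).symm
  rw [(S.φ t ω).injective h5] at ha1
  exact ha2 (hKK ha1)

lemma tendsto_of_DQ {ω : Ω} {K K' : Set UnitAddCircle} (hK : IsClosed K) (hKK : K ⊆ interior K')
    (h : S.DQ ω K') :
    Tendsto (fun t => volume (⇑(S.φ t ω) '' K)) S.tFilter (𝓝 0) := by
  rw [tendsto_iff]
  intro ε hε
  obtain ⟨j, hj⟩ := ENNReal.exists_inv_nat_lt hε.ne'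
  obtain ⟨N, hN⟩ := h j
  refine ⟨N, fun t ht hNt => ?_⟩
  obtain ⟨u, hu, htu, ha, hl⟩ := S.exists_seq ht
  obtain ⟨n, hn⟩ := S.vol_le (ω := ω) hK hKK ht _ hu ha hl
  refine hn.trans ((hN _ (hu n) (hNt.trans (htu n))).trans (le_trans ?_ hj.le))
  exact ENNReal.inv_le_inv.2 le_self_add

lemma DQ_not_both {ω : Ω} {G H : Set UnitAddCircle} (hG : S.DQ ω G) (hH : S.DQ ω H)
    (hu : G ∪ H = univ) : False := by
  obtain ⟨N, hN⟩ := hG 2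
  obtain ⟨M, hM⟩ := hH 2
  have h1 := hN ((max N M : ℕ) : ℚ) (by simpa using S.nat_mem (max N M)) (by simp)
  have h2 := hM ((max N M : ℕ) : ℚ) (by simpa using S.nat_mem (max N M)) (by simp)
  set f := S.φ (((max N M : ℕ) : ℚ) : ℝ) ω
  have h3 : volume (univ : Set UnitAddCircle) ≤ volume (f '' G) + volume (f '' H) := by
    rw [← f.surjective.range_eq, ← image_univ, ← hu, image_union]
    exact measure_union_le _ _
  have h4 : (1 : ℝ≥0∞) ≤ 3⁻¹ + 3⁻¹ := by
    have h5 : volume (univ : Set UnitAddCircle) = 1 := by simp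
    rw [← h5]
    refine h3.trans (add_le_add (h1.trans ?_) (h2.trans ?_)) <;>
    · norm_num
  have h6 : (1 : ℝ) ≤ 3⁻¹ + 3⁻¹ := by
    have := ENNReal.toReal_mono (by finiteness) h4
    rw [ENNReal.toReal_add (by finiteness) (by finiteness)] at this
    simpa using this
  norm_num at h6

lemma crack_unique {ω : Ω} {x y : UnitAddCircle} (hx : S.CrackPoint ω x)
    (hy : S.CrackPoint ω y) : x = y := by
  by_contra hne
  have hd : 0 < dist x y := dist_pos.2 hne
  refine S.DQ_not_both (S.DQ_of_tendsto (hx (Metric.ball x (dist x y / 2))ᶜ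
    Metric.isOpen_ball.isClosed_compl (by simp [hd])))
    (S.DQ_of_tendsto (hy (Metric.closedBall x (dist x y / 2)) Metric.isClosed_closedBall
    (by rw [Metric.mem_closedBall, dist_comm]; linarith))) ?_
  rw [eq_univ_iff_forall]
  intro z
  by_cases hz : z ∈ Metric.ball x (dist x y / 2)
  · exact Or.inr (Metric.ball_subset_closedBall hz)
  · exact Or.inl hz

lemma mem_Ωc_iff (ω : Ω) : ω ∈ S.Ωc ↔ ∀ n : ℕ, ∃ k : ℕ,
    S.DQ ω (Metric.ball (TopologicalSpace.denseSeq UnitAddCircle k) (1 / ((n : ℝ) + 1)))ᶜ := by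
  constructor
  · rintro ⟨r, hr⟩ n
    obtain ⟨k, hk⟩ := (TopologicalSpace.denseRange_denseSeq UnitAddCircle).exists_dist_lt r
      (ε := 1 / ((n : ℝ) + 1)) (by positivity)
    exact ⟨k, S.DQ_of_tendsto (hr _ Metric.isOpen_ball.isClosed_compl (by simpa using hk))⟩
  · intro h
    choose k hk using h
    obtain ⟨r, g, hg, hlim⟩ :=
      CompactSpace.tendsto_subseq (fun n => TopologicalSpace.denseSeq UnitAddCircle (k n))
    refine ⟨r, fun G hG hrG => ?_⟩
    obtain ⟨δ, hδ, hball⟩ := Metric.isOpen_iff.1 hG.isOpen_compl r hrG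
    have e1 : ∀ᶠ n in atTop, dist (TopologicalSpace.denseSeq UnitAddCircle (k (g n))) r < δ / 2 :=
      hlim.eventually (Metric.ball_mem_nhds r (half_pos hδ))
    have e2 : ∀ᶠ n in atTop, 1 / (((g n : ℕ) : ℝ) + 1) < δ / 2 :=
      (tendsto_one_div_add_atTop_nhds_zero_nat.comp hg.tendsto_atTop).eventually
        (gt_mem_nhds (half_pos hδ))
    obtain ⟨n, h1, h2⟩ := (e1.and e2).exists
    refine S.tendsto_of_DQ hG ?_ (hk (g n))
    rw [interior_compl, subset_compl_comm]
    refine Metric.closure_ball_subset_closedBall.trans (fun z hz => hball ?_)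
    rw [Metric.mem_closedBall] at hz
    rw [Metric.mem_ball]
    linarith [dist_triangle z (TopologicalSpace.denseSeq UnitAddCircle (k (g n))) r]

lemma Ωc_measurable : MeasurableSet[S.Fplus] S.Ωc := by
  have : S.Ωc = ⋂ n : ℕ, ⋃ k : ℕ, {ω | S.DQ ω
      (Metric.ball (TopologicalSpace.denseSeq UnitAddCircle k) (1 / ((n : ℝ) + 1)))ᶜ} := by
    ext ω; rw [mem_Ωc_iff]; simp only [mem_iInter, mem_iUnion, mem_ofPred_eq]
  rw [this]
  exact @MeasurableSet.iInter _ _ S.Fplus _ _ fun j => @MeasurableSet.iUnion _ _ S.Fplus _ _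
    fun N => S.DQ_measurable _ Metric.isOpen_ball.isClosed_compl

lemma crack_open_measurable (r : Ω → UnitAddCircle)
    (hr : ∀ ω ∈ S.Ωc, S.CrackPoint ω (r ω)) (U : Set UnitAddCircle) (hU : IsOpen U) :
    MeasurableSet[S.Fplus] {ω | ω ∈ S.Ωc ∧ r ω ∈ U} := by
  have : {ω | ω ∈ S.Ωc ∧ r ω ∈ U} = S.Ωc ∩ ⋃ n : ℕ, ⋃ k : ℕ,
      {ω | Metric.closedBall (TopologicalSpace.denseSeq UnitAddCircle k) (1 / ((n : ℝ) + 1)) ⊆ U ∧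
        S.DQ ω
      (Metric.ball (TopologicalSpace.denseSeq UnitAddCircle k) (1 / ((n : ℝ) + 1)))ᶜ} := by
    ext ω
    simp only [mem_inter_iff, mem_iUnion, mem_ofPred_eq]
    refine and_congr_right fun hω => ?_
    constructor
    · intro hrU
      obtain ⟨δ, hδ, hball⟩ := Metric.isOpen_iff.1 hU _ hrU
      obtain ⟨n, hn⟩ := exists_nat_one_div_lt (half_pos hδ)
      obtain ⟨k, hk⟩ := (TopologicalSpace.denseRange_denseSeq UnitAddCircle).exists_dist_lt (r ω)
        (ε := 1 / ((n : ℝ) + 1)) (by positivity)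
      refine ⟨n, k, fun z hz => hball ?_, S.DQ_of_tendsto
        (hr ω hω _ Metric.isOpen_ball.isClosed_compl (by simpa using hk))⟩
      rw [Metric.mem_closedBall] at hz
      rw [Metric.mem_ball]
      rw [dist_comm] at hk
      linarith [dist_triangle z (TopologicalSpace.denseSeq UnitAddCircle k) (r ω)]
    · rintro ⟨n, k, hsub, hD⟩
      refine hsub ?_
      by_contra hnot
      refine S.DQ_not_both hD (S.DQ_of_tendsto (hr ω hω _ Metric.isClosed_closedBall hnot)) ?_
      rw [eq_univ_iff_forall]
      intro z
      by_cases hz : z ∈ Metric.ball (TopologicalSpace.denseSeq UnitAddCircle k) (1 / ((n : ℝ) + 1))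
      · exact Or.inr (Metric.ball_subset_closedBall hz)
      · exact Or.inl hz
  rw [this]
  refine @MeasurableSet.inter _ S.Fplus _ _ S.Ωc_measurable
    (@MeasurableSet.iUnion _ _ S.Fplus _ _ fun n => @MeasurableSet.iUnion _ _ S.Fplus _ _
    fun k => ?_)
  by_cases hs : Metric.closedBall (TopologicalSpace.denseSeq UnitAddCircle k)
      (1 / ((n : ℝ) + 1)) ⊆ U
  · simp only [hs, true_and]
    exact S.DQ_measurable _ Metric.isOpen_ball.isClosed_compl
  · simp only [hs, false_and]
    exact @MeasurableSet.const _ S.Fplus False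

lemma crack_measurable (r : Ω → UnitAddCircle)
    (hr : ∀ ω ∈ S.Ωc, S.CrackPoint ω (r ω)) (B : Set UnitAddCircle) (hB : MeasurableSet B) :
    MeasurableSet[S.Fplus] {ω | ω ∈ S.Ωc ∧ r ω ∈ B} := by
  induction B, hB using MeasurableSet.induction_on_open with
  | isOpen U hU => exact S.crack_open_measurable r hr U hU
  | compl B hB ih =>
    have : {ω | ω ∈ S.Ωc ∧ r ω ∈ Bᶜ} = S.Ωc \ {ω | ω ∈ S.Ωc ∧ r ω ∈ B} := by
      ext ω; simp only [mem_ofPred_eq, mem_compl_iff, Set.mem_sdiff]; tauto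
    rw [this]
    exact @MeasurableSet.diff _ S.Fplus _ _ S.Ωc_measurable ih
  | iUnion f hd hf ih =>
    have : {ω | ω ∈ S.Ωc ∧ r ω ∈ ⋃ i, f i} = ⋃ i, {ω | ω ∈ S.Ωc ∧ r ω ∈ f i} := by
      ext ω; simp
    rw [this]
    exact @MeasurableSet.iUnion _ _ S.Fplus _ _ ih

lemma crack_shift {t : ℝ} (ht : t ∈ S.T) (ω : Ω) (x : UnitAddCircle) :
    S.CrackPoint (S.θ t ω) (S.φ t ω x) ↔ S.CrackPoint ω x := by
  have himg : ∀ s ∈ S.T, ∀ G : Set UnitAddCircle,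
      ⇑(S.φ (t + s) ω) '' G = ⇑(S.φ s (S.θ t ω)) '' (⇑(S.φ t ω) '' G) := by
    intro s hs G
    rw [image_image]
    exact image_congr fun x _ => S.φ_cocycle t ht s hs ω x
  constructor
  · intro h G hG hx
    have := h (⇑(S.φ t ω) '' G) ((S.φ t ω).isClosedMap G hG)
      (by rwa [(S.φ t ω).injective.mem_set_image])
    rw [tendsto_iff] at this ⊢
    intro ε hε
    obtain ⟨N, hN⟩ := this ε hε
    refine ⟨max t (N + t), fun s hs hle => ?_⟩
    have h1 : t ≤ s := (le_max_left _ _).trans hle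
    have h2 : N + t ≤ s := (le_max_right _ _).trans hle
    have hst := S.sub_mem ht hs h1
    have := hN (s - t) hst (by linarith)
    rwa [← himg _ hst, add_sub_cancel] at this
  · intro h G hG hx
    have := h (⇑(S.φ t ω) ⁻¹' G) (hG.preimage (S.φ t ω).continuous) hx
    rw [tendsto_iff] at this ⊢
    intro ε hε
    obtain ⟨N, hN⟩ := this ε hε
    refine ⟨N - t, fun s hs hle => ?_⟩
    have := hN (t + s) (S.add_mem ht hs) (by linarith)
    rwa [himg _ hs, image_preimage_eq _ (S.φ t ω).surjective] at this

end RDS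

/-- `Ω_c` is `𝓕₊`-measurable, the crack-point map is measurable w.r.t. the
σ-algebra of `𝓕₊`-measurable subsets of `Ω_c`, and for each `t ∈ 𝕋⁺` one has
`(θ^t)⁻¹(Ω_c) = Ω_c` and `r̃(θ^t ω) = φ(t,ω) r̃(ω)` on `Ω_c`. -/
theorem crackPoint_measurable_and_equivariant
    {Ω : Type} [MeasurableSpace Ω] (S : RDS Ω) (r : Ω → UnitAddCircle)
    (hr : ∀ ω ∈ S.Ωc, S.CrackPoint ω (r ω)) :
    MeasurableSet[S.Fplus] S.Ωc ∧
    (∀ B : Set UnitAddCircle, MeasurableSet B →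
      MeasurableSet[S.Fplus] {ω | ω ∈ S.Ωc ∧ r ω ∈ B}) ∧
    (∀ t ∈ S.T, S.θ t ⁻¹' S.Ωc = S.Ωc ∧
      ∀ ω ∈ S.Ωc, r (S.θ t ω) = S.φ t ω (r ω)) := by
  refine ⟨S.Ωc_measurable, S.crack_measurable r hr, fun t ht => ?_⟩
  have hsub : ∀ ω, S.θ t ω ∈ S.Ωc ↔ ω ∈ S.Ωc := by
    intro ω
    constructor
    · rintro ⟨x, hx⟩
      refine ⟨(S.φ t ω).symm x, (S.crack_shift ht ω _).1 ?_⟩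
      simpa using hx
    · rintro ⟨x, hx⟩
      exact ⟨_, (S.crack_shift ht ω x).2 hx⟩
  refine ⟨Set.ext hsub, fun ω hω => ?_⟩
  exact S.crack_unique (hr _ ((hsub ω).2 hω)) ((S.crack_shift ht ω _).2 (hr ω hω))
end
end
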